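/- Suppose n ≥ 1 and r ≥ 4. Then sup_{z ≥ 0} |P(F_r ≤ z) − P(Y_{r−1} ≤ z)| ≤ (12 r^{1/8}/n^{1/4})·(1 + 1/r) + 41/(r^{1/4} n^{1/2}) + 28 r^{3/8}/n^{3/4} + 3 r^{1/8}/n^{5/4} + 8 r^{3/4}/n^{3/2}. -/

import Mathlib

open MeasureTheory Finset Real

noncomputable section

instance instMSPerm (r : ℕ) : MeasurableSpace (Equiv.Perm (Fin r)) := ⊤

/-- The joint law of `n` independent uniformly random permutations of `{1, …, r}`:
the uniform probability measure on the finite product space. -/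
def friedmanMeasure (n r : ℕ) : Measure (Fin n → Equiv.Perm (Fin r)) :=
  (PMF.uniformOfFintype (Fin n → Equiv.Perm (Fin r))).toMeasure

/-- `ρ_i(j) = π_i(j) - (r+1)/2`, where `π_i(j) ∈ {1, …, r}` is the rank assigned by the
`i`-th permutation to treatment `j` (a permutation of `Fin r` assigns values in `{0, …, r-1}`,
hence the `+ 1`). -/
def rho (n r : ℕ) (i : Fin n) (j : Fin r) (ω : Fin n → Equiv.Perm (Fin r)) : ℝ :=
  ((ω i j : ℕ) : ℝ) + 1 - ((r : ℝ) + 1) / 2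

/-- `S_j = (√12/√(r(r+1)n)) ∑_{i=1}^n ρ_i(j)`. -/
def Sstat (n r : ℕ) (j : Fin r) (ω : Fin n → Equiv.Perm (Fin r)) : ℝ :=
  Real.sqrt 12 / Real.sqrt ((r : ℝ) * ((r : ℝ) + 1) * (n : ℝ)) * ∑ i, rho n r i j ω

/-- Friedman's statistic `F_r = ∑_{j=1}^r S_j²`. -/
def friedman (n r : ℕ) (ω : Fin n → Equiv.Perm (Fin r)) : ℝ :=
  ∑ j, (Sstat n r j ω) ^ 2

/-- The chi-square distribution with `p` degrees of freedom: the Gamma distribution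
with shape `p/2` and rate `1/2`. -/
def chiSq (p : ℕ) : Measure ℝ := ProbabilityTheory.gammaMeasure ((p : ℝ) / 2) (1 / 2)

end

/-!
The rank vector of a uniform permutation, centered and scaled by `√12 / √(r (r + 1))`, is an
isotropic vector of constant norm in the hyperplane `E` of vectors with coordinate sum zero, of
dimension `d = r - 1`. Exchangeable pairs show that all its linear functionals have vanishing odd
moments and fourth and sixth moments of Gaussian order. Friedman's statistic is `‖W‖ ^ 2` for the
normalized sum `W = n ^ (-1/2) ∑ᵢ x(ωᵢ)` of such vectors, while `‖G‖ ^ 2` has the chi-square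
distribution for a standard Gaussian `G` on `E`.

For a smooth `f`, differentiate `𝔼 f(‖sin θ • W + cos θ • G‖ ^ 2)` in `θ` and integrate by parts in
`G`. Replacing one summand of `W` at a time, the Taylor terms of order below four cancel since the
second and third moments are Gaussian. A smoothed indicator of `(-∞, z]` has fourth derivative of
order `q ^ 4`, but only on a window of length of order `q⁻¹`; dominating it there by the derivative
of a function of size `q ^ 3` and integrating by parts once more saves a factor. What remains is
balanced against the mass of that window, at most `√2 / (3 √d)` times its length by a uniform bound
on the chi-square density. The choice `q⁻¹ = 5 √d n ^ (-1/4)` gives an error `16 n ^ (-1/4)`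
uniform in `r`.
-/

namespace FriedmanBound

open scoped BigOperators

open scoped NNReal fwdDiff

section FwdDiff

theorem hasDerivAt_fwdDiff_iter {g g' : ℝ → ℝ} (hg : ∀ t, HasDerivAt g (g' t) t) (h : ℝ) (n : ℕ) :
    ∀ t, HasDerivAt (Δ_[h] ^[n] g) (Δ_[h] ^[n] g' t) t := by
  induction n generalizing g g' with
  | zero => exact hg
  | succ _ ih => exact ih fun t => ((hg (t + h)).comp_add_const t h).sub (hg t)

theorem lipschitzWith_fwdDiff_iter {g : ℝ → ℝ} {K : ℝ≥0} (hg : LipschitzWith K g) (h : ℝ) (n : ℕ) :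
    LipschitzWith (2 ^ n * K) (Δ_[h] ^[n] g) := by
  induction n generalizing g K with
  | zero => simpa using hg
  | succ n ih =>
    have hΔ : LipschitzWith (2 * K) (Δ_[h] g) := by
      rw [two_mul]
      exact (mul_one K ▸ hg.comp (isometry_add_right h).lipschitz).sub hg
    simpa [pow_succ, mul_assoc] using ih hΔ

theorem abs_fwdDiff_iter_le (g : ℝ → ℝ) (h : ℝ) (n : ℕ) (t : ℝ) :
    |Δ_[h] ^[n] g t| ≤ ∑ k ∈ range (n + 1), n.choose k * |g (t + k • h)| := by
  rw [fwdDiff_iter_eq_sum_shift]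
  refine (abs_sum_le_sum_abs _ _).trans (sum_le_sum fun k _ => ?_)
  simp [abs_mul]

theorem abs_fwdDiff_le_one {g : ℝ → ℝ} (hg : ∀ t, g t ∈ Set.Icc 0 1) (h t : ℝ) :
    |Δ_[h] g t| ≤ 1 :=
  abs_sub_le_iff.2 ⟨by linarith [(hg (t + h)).2, (hg t).1], by linarith [(hg (t + h)).1, (hg t).2]⟩

end FwdDiff

section Ramp

/-- The clamp of `t` to `[0, 1]`, averaged `k` times over unit intervals: the distribution function
of a sum of `k + 1` independent uniform variables on `[0, 1]`, shifted by `k` so that derivatives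
of `ramp` are forward differences. -/
noncomputable def ramp : ℕ → ℝ → ℝ
  | 0 => fun t => max 0 (min t 1)
  | k + 1 => fun t => ∫ x in t..t + 1, ramp k x

theorem ramp_succ_eq {k : ℕ} (hk : Continuous (ramp k)) :
    ramp (k + 1) = Δ_[1] fun t => ∫ x in (0 : ℝ)..t, ramp k x :=
  funext fun _ => (intervalIntegral.integral_interval_sub_left (hk.intervalIntegrable _ _)
    (hk.intervalIntegrable _ _)).symm

theorem continuous_ramp : ∀ k, Continuous (ramp k)
  | 0 => by unfold ramp; fun_prop
  | k + 1 => by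
    have hk := continuous_ramp k
    have := intervalIntegral.continuous_primitive (μ := volume)
      (fun a b => hk.intervalIntegrable a b) 0
    rw [ramp_succ_eq hk]
    unfold fwdDiff
    fun_prop

theorem hasDerivAt_ramp_succ (k : ℕ) (t : ℝ) : HasDerivAt (ramp (k + 1)) (Δ_[1] (ramp k) t) t := by
  have hk := continuous_ramp k
  rw [ramp_succ_eq hk]
  exact hasDerivAt_fwdDiff_iter (fun t => intervalIntegral.integral_hasDerivAt_right
    (hk.intervalIntegrable _ _) (hk.stronglyMeasurableAtFilter _ _) hk.continuousAt) 1 1 t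

theorem lipschitzWith_ramp_zero : LipschitzWith 1 (ramp 0) :=
  (LipschitzWith.id.min_const 1).const_max 0

theorem ramp_mem_Icc (k : ℕ) (t : ℝ) : ramp k t ∈ Set.Icc 0 1 := by
  induction k generalizing t with
  | zero => simp [ramp]
  | succ k ih =>
    refine ⟨intervalIntegral.integral_nonneg (by linarith) fun x _ => (ih x).1, ?_⟩
    simpa [ramp] using intervalIntegral.integral_mono_on (a := t) (b := t + 1) (by linarith)
      ((continuous_ramp k).intervalIntegrable _ _)
      (continuous_const.intervalIntegrable (μ := volume) _ _) fun x _ => (ih x).2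

theorem ramp_eq_zero (k : ℕ) {t : ℝ} (ht : t ≤ -k) : ramp k t = 0 := by
  induction k generalizing t with
  | zero => simp_all [ramp]
  | succ k ih =>
    push_cast at ht
    have h : Set.EqOn (ramp k) 0 (Set.uIcc t (t + 1)) := fun x hx =>
      ih (by linarith [(Set.uIcc_of_le (by linarith : t ≤ t + 1) ▸ hx).2])
    simpa [ramp] using intervalIntegral.integral_congr (μ := volume) h

theorem ramp_eq_one (k : ℕ) {t : ℝ} (ht : 1 ≤ t) : ramp k t = 1 := by
  induction k generalizing t with
  | zero => simp [ramp, ht]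
  | succ k ih =>
    have h : Set.EqOn (ramp k) 1 (Set.uIcc t (t + 1)) := fun x hx =>
      ih (ht.trans (Set.uIcc_of_le (by linarith : t ≤ t + 1) ▸ hx).1)
    simpa [ramp] using intervalIntegral.integral_congr (μ := volume) h

theorem monotone_ramp (k : ℕ) : Monotone (ramp k) := by
  induction k with
  | zero => intro x y h; simp only [ramp]; gcongr
  | succ k ih =>
    exact monotone_of_hasDerivAt_nonneg (hasDerivAt_ramp_succ k) fun t =>
      sub_nonneg.2 (ih (by simp))

theorem fwdDiff_ramp_mem_Icc (k : ℕ) (t : ℝ) : Δ_[1] (ramp k) t ∈ Set.Icc 0 1 :=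
  ⟨sub_nonneg.2 (monotone_ramp k (by simp)),
    (le_abs_self _).trans (abs_fwdDiff_le_one (ramp_mem_Icc k) 1 t)⟩

end Ramp

section SmoothTest

/-- A four times differentiable function `f` with derivatives `f₁, …, f₄` of size `|fⱼ| ≲ q ^ j`,
the last of which is Lipschitz and dominated by the derivative `χ₁` of a function `χ` of size
`q ^ 3`. The domination means that `f₄` is of size `q ^ 4` only on an interval of length of order
`q⁻¹`. -/
structure SmoothTest (q : ℝ) where
  (f f₁ f₂ f₃ f₄ χ χ₁ : ℝ → ℝ)
  hasDerivAt_f : ∀ x, HasDerivAt f (f₁ x) x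
  hasDerivAt_f₁ : ∀ x, HasDerivAt f₁ (f₂ x) x
  hasDerivAt_f₂ : ∀ x, HasDerivAt f₂ (f₃ x) x
  hasDerivAt_f₃ : ∀ x, HasDerivAt f₃ (f₄ x) x
  hasDerivAt_χ : ∀ x, HasDerivAt χ (χ₁ x) x
  continuous_χ₁ : Continuous χ₁
  abs_f_le : ∀ x, |f x| ≤ 1
  abs_f₁_le : ∀ x, |f₁ x| ≤ q
  abs_f₂_le : ∀ x, |f₂ x| ≤ q ^ 2
  abs_f₃_le : ∀ x, |f₃ x| ≤ 2 * q ^ 3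
  abs_f₄_le : ∀ x, |f₄ x| ≤ χ₁ x
  abs_f₄_sub_le : ∀ x y, |f₄ x - f₄ y| ≤ 16 * q ^ 5 * |x - y|
  abs_χ_le : ∀ x, |χ x| ≤ 4 * q ^ 3
  χ₁_le : ∀ x, χ₁ x ≤ 8 * q ^ 4

variable {g g' : ℝ → ℝ} {q : ℝ}

theorem hasDerivAt_rescale (hg : ∀ t, HasDerivAt g (g' t) t) (a q : ℝ) (j : ℕ) (x : ℝ) :
    HasDerivAt (fun x => q ^ j * g ((x - a) * q - 4)) (q ^ (j + 1) * g' ((x - a) * q - 4)) x := by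
  have h : HasDerivAt (fun x : ℝ => (x - a) * q - 4) q x := by
    simpa using (((hasDerivAt_id x).sub_const a).mul_const q).sub_const 4
  exact (((hg _).comp x h).const_mul (q ^ j)).congr_deriv (by ring)

theorem abs_pow_mul_le {C y : ℝ} (hy : |y| ≤ C) (hq : 0 ≤ q) (j : ℕ) : |q ^ j * y| ≤ C * q ^ j := by
  rw [abs_mul, abs_of_nonneg (pow_nonneg hq j), mul_comm]
  gcongr

/-- The sum `∑ k, n.choose k * g (t + k)` of the absolute values of the terms of `Δ_[1] ^[n] g t`
(for `g ≥ 0`). -/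
def binomialSum (n : ℕ) (g : ℝ → ℝ) (t : ℝ) : ℝ := ∑ k ∈ range (n + 1), n.choose k * g (t + k)

theorem hasDerivAt_binomialSum (hg : ∀ t, HasDerivAt g (g' t) t) (n : ℕ) (t : ℝ) :
    HasDerivAt (binomialSum n g) (binomialSum n g' t) t :=
  HasDerivAt.fun_sum fun k _ => ((hg (t + k)).comp_add_const t k).const_mul _

theorem continuous_binomialSum (hg : Continuous g) (n : ℕ) : Continuous (binomialSum n g) := by
  unfold binomialSum
  fun_prop

theorem binomialSum_mem_Icc (hg : ∀ t, g t ∈ Set.Icc 0 1) (n : ℕ) (t : ℝ) :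
    binomialSum n g t ∈ Set.Icc 0 (2 ^ n) := by
  refine ⟨sum_nonneg fun k _ => mul_nonneg (Nat.cast_nonneg _) (hg _).1, ?_⟩
  calc binomialSum n g t ≤ ∑ k ∈ range (n + 1), (n.choose k : ℝ) :=
        sum_le_sum fun k _ => mul_le_of_le_one_right (Nat.cast_nonneg _) (hg _).2
    _ = 2 ^ n := by exact_mod_cast Nat.sum_range_choose n

theorem abs_fwdDiff_iter_le_binomialSum (hg : ∀ t, 0 ≤ g t) (n : ℕ) (t : ℝ) :
    |Δ_[1] ^[n] g t| ≤ binomialSum n g t := by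
  simpa [binomialSum, abs_of_nonneg (hg _)] using abs_fwdDiff_iter_le g 1 n t

/-- The test function `x ↦ ramp 4 ((x - a) * q - 4)`, a step from `0` to `1` on the interval
`[a, a + 5 * q⁻¹]`. -/
noncomputable def stepFunction (a : ℝ) (hq : 0 ≤ q) : SmoothTest q where
  f x := q ^ 0 * ramp 4 ((x - a) * q - 4)
  f₁ x := q ^ 1 * Δ_[1] (ramp 3) ((x - a) * q - 4)
  f₂ x := q ^ 2 * Δ_[1] ^[2] (ramp 2) ((x - a) * q - 4)
  f₃ x := q ^ 3 * Δ_[1] ^[3] (ramp 1) ((x - a) * q - 4)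
  f₄ x := q ^ 4 * Δ_[1] ^[4] (ramp 0) ((x - a) * q - 4)
  χ x := q ^ 3 * (binomialSum 3 (ramp 1) ((x - a) * q - 4) - 4)
  χ₁ x := q ^ 4 * binomialSum 3 (Δ_[1] (ramp 0)) ((x - a) * q - 4)
  hasDerivAt_f := hasDerivAt_rescale (hasDerivAt_ramp_succ 3) a q 0
  hasDerivAt_f₁ := hasDerivAt_rescale
    (hasDerivAt_fwdDiff_iter (hasDerivAt_ramp_succ 2) 1 1) a q 1
  hasDerivAt_f₂ := hasDerivAt_rescale
    (hasDerivAt_fwdDiff_iter (hasDerivAt_ramp_succ 1) 1 2) a q 2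
  hasDerivAt_f₃ := hasDerivAt_rescale
    (hasDerivAt_fwdDiff_iter (hasDerivAt_ramp_succ 0) 1 3) a q 3
  hasDerivAt_χ := hasDerivAt_rescale (g := fun t => binomialSum 3 (ramp 1) t - 4)
    (fun t => (hasDerivAt_binomialSum (hasDerivAt_ramp_succ 0) 3 t).sub_const 4) a q 3
  continuous_χ₁ := by
    have h0 := continuous_ramp 0
    have := continuous_binomialSum (g := Δ_[1] (ramp 0)) (by unfold fwdDiff; fun_prop) 3
    fun_prop
  abs_f_le x := by
    obtain ⟨h0, h1⟩ := ramp_mem_Icc 4 ((x - a) * q - 4)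
    simpa [abs_of_nonneg h0] using h1
  abs_f₁_le x := by simpa using abs_pow_mul_le (abs_fwdDiff_le_one (ramp_mem_Icc 3) 1 _) hq 1
  abs_f₂_le x := by
    simpa using abs_pow_mul_le (abs_fwdDiff_le_one (fwdDiff_ramp_mem_Icc 2) 1 _) hq 2
  abs_f₃_le x := by
    refine abs_pow_mul_le ((abs_sub _ _).trans ?_) hq 3
    have h := abs_fwdDiff_le_one (fwdDiff_ramp_mem_Icc 1) 1
    linarith [h ((x - a) * q - 4), h ((x - a) * q - 4 + 1)]
  abs_f₄_le x := by
    rw [abs_mul, abs_of_nonneg (pow_nonneg hq 4)]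
    gcongr
    exact abs_fwdDiff_iter_le_binomialSum (fun t => (fwdDiff_ramp_mem_Icc 0 t).1) 3 _
  abs_f₄_sub_le x y := by
    have h := (lipschitzWith_fwdDiff_iter lipschitzWith_ramp_zero 1 4).dist_le_mul
      ((x - a) * q - 4) ((y - a) * q - 4)
    rw [dist_eq, dist_eq, show (x - a) * q - 4 - ((y - a) * q - 4) = q * (x - y) by ring, abs_mul,
      abs_of_nonneg hq] at h
    rw [← mul_sub]
    exact (abs_pow_mul_le h hq 4).trans_eq (by push_cast; ring)
  abs_χ_le x := by
    obtain ⟨h0, h1⟩ := binomialSum_mem_Icc (ramp_mem_Icc 1) 3 ((x - a) * q - 4)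
    exact abs_pow_mul_le (abs_le.2 ⟨by linarith, by linarith⟩) hq 3
  χ₁_le x := by
    have h := (binomialSum_mem_Icc (fwdDiff_ramp_mem_Icc 0) 3 ((x - a) * q - 4)).2
    rw [mul_comm]
    gcongr
    linarith

theorem stepFunction_mem_Icc (a : ℝ) (hq : 0 ≤ q) (x : ℝ) :
    (stepFunction a hq).f x ∈ Set.Icc 0 1 := by
  simpa [stepFunction] using ramp_mem_Icc 4 _

theorem stepFunction_eq_zero {a x : ℝ} (hq : 0 ≤ q) (hx : x ≤ a) : (stepFunction a hq).f x = 0 := by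
  have h : (x - a) * q - 4 ≤ -(4 : ℕ) := by
    push_cast
    linarith [mul_nonpos_of_nonpos_of_nonneg (sub_nonpos.2 hx) hq]
  simp [stepFunction, ramp_eq_zero 4 h]

theorem stepFunction_eq_one {a x : ℝ} (hq : 0 ≤ q) (hx : 5 ≤ (x - a) * q) :
    (stepFunction a hq).f x = 1 := by
  simp [stepFunction, ramp_eq_one 4 (by linarith : 1 ≤ (x - a) * q - 4)]

end SmoothTest

section Taylor

theorem abs_le_mul_pow_of_abs_deriv_le {φ φ' : ℝ → ℝ} {K : ℝ} {m : ℕ}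
    (hφ : ∀ u, HasDerivAt φ (φ' u) u) (h0 : φ 0 = 0) (hK : ∀ u, |φ' u| ≤ K * |u| ^ m) (u : ℝ) :
    |φ u| ≤ K / (m + 1) * |u| ^ (m + 1) := by
  wlog hu : 0 ≤ u generalizing φ φ' u
  · simpa using this (φ := fun x => φ (-x)) (φ' := fun x => -φ' (-x))
      (fun x => ((hφ (-x)).comp x (hasDerivAt_neg x)).congr_deriv (by ring)) (by simpa using h0)
      (fun x => by simpa using hK (-x)) (-u) (by linarith)
  have hB (x : ℝ) : HasDerivAt (fun x => K / (m + 1) * x ^ (m + 1)) (K * x ^ m) x :=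
    ((hasDerivAt_pow (m + 1) x).const_mul (K / (m + 1))).congr_deriv (by push_cast; field_simp)
  rw [abs_of_nonneg hu]
  exact image_norm_le_of_norm_deriv_right_le_deriv_boundary (a := 0) (b := u)
    (fun x _ => (hφ x).continuousAt.continuousWithinAt) (fun x _ => (hφ x).hasDerivWithinAt)
    (by simp [h0]) hB (fun x hx => by simpa [abs_of_nonneg hx.1] using hK x) ⟨hu, le_rfl⟩

namespace SmoothTest

variable {q : ℝ} (S : SmoothTest q)

theorem abs_f₃_sub_taylor_le (b u : ℝ) :
    |S.f₃ (b + u) - S.f₃ b - S.f₄ b * u| ≤ 8 * q ^ 5 * |u| ^ 2 := by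
  have h (u : ℝ) : HasDerivAt (fun u => S.f₃ (b + u) - S.f₃ b - S.f₄ b * u)
      (S.f₄ (b + u) - S.f₄ b) u :=
    ((((S.hasDerivAt_f₃ (b + u)).comp_const_add b u).sub_const _).sub
      ((hasDerivAt_id u).const_mul _)).congr_deriv (by ring)
  refine (abs_le_mul_pow_of_abs_deriv_le (K := 16 * q ^ 5) (m := 1) h (by simp)
    (fun u => by simpa using S.abs_f₄_sub_le (b + u) b) u).trans_eq ?_
  push_cast
  ring

theorem abs_f₂_sub_taylor_le (b u : ℝ) :
    |S.f₂ (b + u) - S.f₂ b - S.f₃ b * u - S.f₄ b * u ^ 2 / 2| ≤ 8 / 3 * q ^ 5 * |u| ^ 3 := by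
  have h (u : ℝ) : HasDerivAt (fun u => S.f₂ (b + u) - S.f₂ b - S.f₃ b * u - S.f₄ b * u ^ 2 / 2)
      (S.f₃ (b + u) - S.f₃ b - S.f₄ b * u) u :=
    (((((S.hasDerivAt_f₂ (b + u)).comp_const_add b u).sub_const _).sub
      ((hasDerivAt_id u).const_mul _)).sub
      (((hasDerivAt_pow 2 u).const_mul _).div_const 2)).congr_deriv (by push_cast; ring)
  refine (abs_le_mul_pow_of_abs_deriv_le h (by simp) (S.abs_f₃_sub_taylor_le b) u).trans_eq ?_
  push_cast
  ring

theorem abs_f₁_sub_taylor_le (b u : ℝ) :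
    |S.f₁ (b + u) - S.f₁ b - S.f₂ b * u - S.f₃ b * u ^ 2 / 2 - S.f₄ b * u ^ 3 / 6|
      ≤ 2 / 3 * q ^ 5 * |u| ^ 4 := by
  have h (u : ℝ) : HasDerivAt
      (fun u => S.f₁ (b + u) - S.f₁ b - S.f₂ b * u - S.f₃ b * u ^ 2 / 2 - S.f₄ b * u ^ 3 / 6)
      (S.f₂ (b + u) - S.f₂ b - S.f₃ b * u - S.f₄ b * u ^ 2 / 2) u :=
    ((((((S.hasDerivAt_f₁ (b + u)).comp_const_add b u).sub_const _).sub
      ((hasDerivAt_id u).const_mul _)).sub (((hasDerivAt_pow 2 u).const_mul _).div_const 2)).sub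
      (((hasDerivAt_pow 3 u).const_mul _).div_const 6)).congr_deriv (by push_cast; ring)
  refine (abs_le_mul_pow_of_abs_deriv_le h (by simp) (S.abs_f₂_sub_taylor_le b) u).trans_eq ?_
  push_cast
  ring

end SmoothTest

end Taylor

section NearGaussianMoments

variable {P : Type*} [Fintype P] {L : P → ℝ} {B : ℝ}

/-- A function on a finite uniform probability space whose first three moments are those of a
centred Gaussian variable of variance `B`, and whose fourth and sixth moments are at most a constant
times the Gaussian ones. -/
structure NearGaussianMoments (L : P → ℝ) (B : ℝ) : Prop where
  expect : 𝔼 p, L p = 0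
  expect_sq : 𝔼 p, L p ^ 2 = B
  expect_cube : 𝔼 p, L p ^ 3 = 0
  expect_pow_four_le : 𝔼 p, L p ^ 4 ≤ 18 * B ^ 2
  expect_pow_six_le : 𝔼 p, L p ^ 6 ≤ 540 * B ^ 3

namespace NearGaussianMoments

theorem nonneg (hL : NearGaussianMoments L B) : 0 ≤ B :=
  hL.expect_sq ▸ expect_nonneg fun _ _ => sq_nonneg _

theorem expect_abs_cube_le (hL : NearGaussianMoments L B) : 𝔼 p, |L p| ^ 3 ≤ 5 * √B ^ 3 := by
  have hB := hL.nonneg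
  refine abs_le_of_sq_le_sq' ?_ (by positivity) |>.2
  calc (𝔼 p, |L p| ^ 3) ^ 2 = (𝔼 p, |L p| * |L p| ^ 2) ^ 2 := by simp only [← pow_succ']
    _ ≤ (𝔼 p, L p ^ 2) * 𝔼 p, L p ^ 4 := by
      refine (expect_mul_sq_le_sq_mul_sq univ _ _).trans_eq ?_
      simp only [sq_abs, ← pow_mul, Nat.reduceMul]
    _ ≤ B * (18 * B ^ 2) := by rw [hL.expect_sq]; gcongr; exact hL.expect_pow_four_le
    _ ≤ 25 * B ^ 3 := by nlinarith [pow_nonneg hB 3]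
    _ = (5 * √B ^ 3) ^ 2 := by linear_combination -25 * congrArg (· ^ 3) (sq_sqrt hB)

theorem expect_abs_pow_five_le (hL : NearGaussianMoments L B) :
    𝔼 p, |L p| ^ 5 ≤ 99 * √B ^ 5 := by
  have hB := hL.nonneg
  refine abs_le_of_sq_le_sq' ?_ (by positivity) |>.2
  calc (𝔼 p, |L p| ^ 5) ^ 2 = (𝔼 p, |L p| ^ 2 * |L p| ^ 3) ^ 2 := by
        simp only [← pow_add, Nat.reduceAdd]
    _ ≤ (𝔼 p, L p ^ 4) * 𝔼 p, L p ^ 6 := by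
      refine (expect_mul_sq_le_sq_mul_sq univ _ _).trans_eq ?_
      simp only [← pow_mul, Nat.reduceMul, Even.pow_abs (by decide : Even 4),
        Even.pow_abs (by decide : Even 6)]
    _ ≤ 18 * B ^ 2 * (540 * B ^ 3) :=
      mul_le_mul hL.expect_pow_four_le hL.expect_pow_six_le
        (expect_nonneg fun _ _ => by positivity) (by positivity)
    _ ≤ 9801 * B ^ 5 := by nlinarith [pow_nonneg hB 5]
    _ = (99 * √B ^ 5) ^ 2 := by linear_combination -9801 * congrArg (· ^ 5) (sq_sqrt hB)

variable [Nonempty P]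

theorem expect_quartic (hL : NearGaussianMoments L B) (c₀ c₁ c₂ c₃ c₄ : ℝ) :
    𝔼 p, (c₀ + c₁ * L p + c₂ * L p ^ 2 + c₃ * L p ^ 3 + c₄ * L p ^ 4)
      = c₀ + c₂ * B + c₄ * 𝔼 p, L p ^ 4 := by
  simp [expect_add_distrib, ← mul_expect, hL.expect, hL.expect_sq, hL.expect_cube]

theorem expect_cubic (hL : NearGaussianMoments L B) (c₀ c₁ c₂ c₃ : ℝ) :
    𝔼 p, (c₀ + c₁ * L p + c₂ * L p ^ 2 + c₃ * L p ^ 3) = c₀ + c₂ * B := by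
  simpa using hL.expect_quartic c₀ c₁ c₂ c₃ 0

end NearGaussianMoments

end NearGaussianMoments

section OneStep

namespace SmoothTest

variable {q : ℝ} (S : SmoothTest q)

/-- The contribution of one summand to the derivative of the interpolation: `τ` is the weight of the
summand, `l` its inner product with the sum of the other terms and `b + 2 * τ * l` the squared norm
of the total. Its average is the discrepancy in the Gaussian integration by parts formula. -/
def stepTerm (τ b l : ℝ) : ℝ :=
  S.f₁ (b + 2 * τ * l) * l - 2 * τ * (b + 2 * τ * l) * S.f₂ (b + 2 * τ * l)

/-- The expansion of `stepTerm τ b l` around `l = 0`, up to fourth derivatives of `f`. -/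
noncomputable def stepPoly (τ b l : ℝ) : ℝ :=
  -2 * τ * b * S.f₂ b
    + (S.f₁ b - 4 * τ ^ 2 * b * S.f₃ b - 4 * τ ^ 2 * S.f₂ b) * l
    + (2 * τ * S.f₂ b - 4 * τ ^ 3 * b * S.f₄ b - 8 * τ ^ 3 * S.f₃ b) * l ^ 2
    + (2 * τ ^ 2 * S.f₃ b - 8 * τ ^ 4 * S.f₄ b) * l ^ 3
    + 4 / 3 * τ ^ 3 * S.f₄ b * l ^ 4

variable {P : Type*} [Fintype P] {L : P → ℝ} {B τ b : ℝ}

theorem abs_stepTerm_sub_stepPoly_le (hτ : 0 ≤ τ) (hb : 0 ≤ b) (l : ℝ) :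
    |S.stepTerm τ b l - S.stepPoly τ b l| ≤ q ^ 5 * τ ^ 4 *
      (32 / 3 * |l| ^ 5 + 128 / 3 * b * |l| ^ 3 + 256 / 3 * τ * l ^ 4) := by
  set u := 2 * τ * l with hu
  have hu_abs : |u| = 2 * τ * |l| := by rw [hu, abs_mul, abs_of_nonneg (by positivity)]
  set r₁ := S.f₁ (b + u) - S.f₁ b - S.f₂ b * u - S.f₃ b * u ^ 2 / 2 - S.f₄ b * u ^ 3 / 6 with hr₁
  set r₂ := S.f₂ (b + u) - S.f₂ b - S.f₃ b * u - S.f₄ b * u ^ 2 / 2 with hr₂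
  have h₁ : |r₁| ≤ 2 / 3 * q ^ 5 * (2 * τ * |l|) ^ 4 := hu_abs ▸ S.abs_f₁_sub_taylor_le b u
  have h₂ : |r₂| ≤ 8 / 3 * q ^ 5 * (2 * τ * |l|) ^ 3 := hu_abs ▸ S.abs_f₂_sub_taylor_le b u
  have hbu : |b + u| ≤ b + 2 * τ * |l| := by
    simpa [abs_of_nonneg hb, hu_abs] using abs_add_le b u
  calc |S.stepTerm τ b l - S.stepPoly τ b l| = |r₁ * l - 2 * τ * ((b + u) * r₂)| := by
        congr 1
        simp only [stepTerm, stepPoly, hr₁, hr₂, ← hu]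
        simp only [hu]
        ring
    _ ≤ |r₁| * |l| + 2 * τ * (|b + u| * |r₂|) := by
        simpa [abs_mul, abs_of_nonneg hτ] using abs_sub (r₁ * l) (2 * τ * ((b + u) * r₂))
    _ ≤ 2 / 3 * q ^ 5 * (2 * τ * |l|) ^ 4 * |l|
        + 2 * τ * ((b + 2 * τ * |l|) * (8 / 3 * q ^ 5 * (2 * τ * |l|) ^ 3)) := by gcongr
    _ = _ := by rw [← Even.pow_abs (by decide : Even 4) l]; ring

theorem expect_abs_stepTerm_sub_stepPoly_le (hL : NearGaussianMoments L B) (hq : 0 ≤ q)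
    (hτ : 0 ≤ τ) (hBb : B ≤ b) :
    𝔼 p, |S.stepTerm τ b (L p) - S.stepPoly τ b (L p)|
      ≤ q ^ 5 * τ ^ 4 * (1270 * √b ^ 5 + 1536 * τ * b ^ 2) := by
  have hB := hL.nonneg
  have hb := hB.trans hBb
  have h5 : √B ^ 5 ≤ √b ^ 5 := by gcongr
  have h3 : b * √B ^ 3 ≤ √b ^ 5 :=
    calc b * √B ^ 3 ≤ b * √b ^ 3 := by gcongr
      _ = √b ^ 5 := by linear_combination -√b ^ 3 * sq_sqrt hb
  have h4 : τ * B ^ 2 ≤ τ * b ^ 2 := by gcongr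
  calc 𝔼 p, |S.stepTerm τ b (L p) - S.stepPoly τ b (L p)|
      ≤ 𝔼 p, q ^ 5 * τ ^ 4 *
          (32 / 3 * |L p| ^ 5 + 128 / 3 * b * |L p| ^ 3 + 256 / 3 * τ * L p ^ 4) :=
        expect_le_expect fun p _ => S.abs_stepTerm_sub_stepPoly_le hτ hb (L p)
    _ = q ^ 5 * τ ^ 4 * (32 / 3 * 𝔼 p, |L p| ^ 5 + 128 / 3 * b * 𝔼 p, |L p| ^ 3
          + 256 / 3 * τ * 𝔼 p, L p ^ 4) := by simp only [← mul_expect, expect_add_distrib]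
    _ ≤ q ^ 5 * τ ^ 4 * (32 / 3 * (99 * √B ^ 5) + 128 / 3 * b * (5 * √B ^ 3)
          + 256 / 3 * τ * (18 * B ^ 2)) := by
        gcongr
        exacts [hL.expect_abs_pow_five_le, hL.expect_abs_cube_le, hL.expect_pow_four_le]
    _ ≤ _ := by
        refine mul_le_mul_of_nonneg_left ?_ (by positivity)
        linarith [pow_nonneg (sqrt_nonneg b) 5]

variable [Nonempty P]

theorem abs_expect_stepPoly_le (hL : NearGaussianMoments L B) {D : ℝ} (hτ : 0 ≤ τ)
    (hD : 0 ≤ D) (hb : b = B + τ ^ 2 * D) :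
    |𝔼 p, S.stepPoly τ b (L p)|
      ≤ τ ^ 3 * (2 * D * q ^ 2 + 16 * b * q ^ 3 + 20 * (b * B * S.χ₁ b)) := by
  have hB := hL.nonneg
  have hBb : B ≤ b := by rw [hb]; exact le_add_of_nonneg_right (by positivity)
  have hM₀ : 0 ≤ 𝔼 p, L p ^ 4 := expect_nonneg fun p _ => by positivity
  have hM : |4 / 3 * 𝔼 p, L p ^ 4 - 4 * (b * B)| ≤ 20 * (b * B) := by
    rw [abs_le]
    constructor <;> nlinarith [hL.expect_pow_four_le]
  set M := 𝔼 p, L p ^ 4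
  calc |𝔼 p, S.stepPoly τ b (L p)|
      = |τ ^ 3 * (-(2 * D * S.f₂ b) - 8 * B * S.f₃ b + (4 / 3 * M - 4 * (b * B)) * S.f₄ b)| := by
        simp only [stepPoly, hL.expect_quartic]
        congr 1
        linear_combination -2 * τ * S.f₂ b * hb
    _ ≤ τ ^ 3 * (2 * D * |S.f₂ b| + 8 * B * |S.f₃ b| + |4 / 3 * M - 4 * (b * B)| * |S.f₄ b|) := by
        rw [abs_mul, abs_of_nonneg (pow_nonneg hτ 3)]
        gcongr
        refine (abs_add_le _ _).trans (add_le_add ((abs_sub _ _).trans_eq ?_) (abs_mul _ _).le)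
        simp [abs_mul, abs_of_nonneg hD, abs_of_nonneg hB]
    _ ≤ τ ^ 3 * (2 * D * q ^ 2 + 8 * b * (2 * q ^ 3) + 20 * (b * B) * S.χ₁ b) := by
        gcongr
        exacts [S.abs_f₂_le b, by linarith, S.abs_f₃_le b, by have := hB.trans hBb; positivity,
          S.abs_f₄_le b]
    _ = _ := by ring

theorem abs_expect_stepTerm_le (hL : NearGaussianMoments L B) {D : ℝ} (hq : 0 ≤ q) (hτ : 0 ≤ τ)
    (hD : 0 ≤ D) (hb : b = B + τ ^ 2 * D) :
    |𝔼 p, S.stepTerm τ b (L p)|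
      ≤ τ ^ 3 * (2 * D * q ^ 2 + 16 * b * q ^ 3 + 20 * (b * B * S.χ₁ b)
        + q ^ 5 * τ * (1270 * √b ^ 5 + 1536 * τ * b ^ 2)) := by
  have hBb : B ≤ b := by rw [hb]; exact le_add_of_nonneg_right (by positivity)
  calc |𝔼 p, S.stepTerm τ b (L p)|
      = |𝔼 p, S.stepPoly τ b (L p) + 𝔼 p, (S.stepTerm τ b (L p) - S.stepPoly τ b (L p))| := by
        rw [expect_sub_distrib, add_sub_cancel]
    _ ≤ |𝔼 p, S.stepPoly τ b (L p)| + 𝔼 p, |S.stepTerm τ b (L p) - S.stepPoly τ b (L p)| :=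
        (abs_add_le _ _).trans (by gcongr; exact abs_expect_le _ _)
    _ ≤ τ ^ 3 * (2 * D * q ^ 2 + 16 * b * q ^ 3 + 20 * (b * B * S.χ₁ b))
        + q ^ 5 * τ ^ 4 * (1270 * √b ^ 5 + 1536 * τ * b ^ 2) :=
        add_le_add (S.abs_expect_stepPoly_le hL hτ hD hb)
          (S.expect_abs_stepTerm_sub_stepPoly_le hL hq hτ hBb)
    _ = _ := by ring

end SmoothTest

end OneStep

section PolyGrowth

open Asymptotics

variable {E F G : Type*} [NormedAddCommGroup E] [NormedAddCommGroup F] [NormedAddCommGroup G]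

/-- Continuous functions of polynomial growth. They form the class of integrands for Gaussian
measures: it is stable under all the operations below, so that integrability can be left to
`fun_prop`. -/
@[fun_prop]
structure PolyGrowth (u : E → F) : Prop where
  continuous : Continuous u
  exists_isBigO : ∃ k : ℕ, u =O[⊤] fun x => (1 + ‖x‖) ^ k

namespace PolyGrowth

theorem isBigO_one_add_norm_pow {k l : ℕ} (h : k ≤ l) :
    (fun x : E => (1 + ‖x‖) ^ k) =O[⊤] fun x => (1 + ‖x‖) ^ l :=
  IsBigO.of_norm_le fun x => by
    rw [norm_of_nonneg (by positivity)]
    exact pow_le_pow_right₀ (by linarith [norm_nonneg x]) h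

theorem of_norm_le {u : E → F} {K : ℝ} (hu : Continuous u) (h : ∀ x, ‖u x‖ ≤ K) : PolyGrowth u :=
  ⟨hu, 0, IsBigO.of_bound K (by simpa using h)⟩

@[fun_prop]
theorem id : PolyGrowth fun x : E => x :=
  ⟨continuous_id, 1, IsBigO.of_norm_le fun x => by linarith⟩

@[fun_prop]
theorem const (c : F) : PolyGrowth fun _ : E => c := of_norm_le continuous_const fun _ => le_rfl

@[fun_prop]
theorem comp {u : F → G} {v : E → F} (hu : PolyGrowth u) (hv : PolyGrowth v) :
    PolyGrowth fun x => u (v x) := by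
  obtain ⟨k, hk⟩ := hu.exists_isBigO
  obtain ⟨l, hl⟩ := hv.exists_isBigO
  have h1 : (fun _ : E => (1 : ℝ)) =O[⊤] fun x => (1 + ‖x‖) ^ l := by
    simpa using isBigO_one_add_norm_pow (E := E) (Nat.zero_le l)
  refine ⟨hu.continuous.comp hv.continuous, l * k, ?_⟩
  simp only [pow_mul]
  exact (hk.comp_tendsto Filter.tendsto_top).trans ((h1.add hl.norm_left).pow k)

@[fun_prop]
theorem add {u v : E → F} (hu : PolyGrowth u) (hv : PolyGrowth v) :
    PolyGrowth fun x => u x + v x := by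
  obtain ⟨k, hk⟩ := hu.exists_isBigO
  obtain ⟨l, hl⟩ := hv.exists_isBigO
  exact ⟨hu.continuous.add hv.continuous, k + l,
    (hk.trans (isBigO_one_add_norm_pow (Nat.le_add_right k l))).add
      (hl.trans (isBigO_one_add_norm_pow (Nat.le_add_left l k)))⟩

@[fun_prop]
theorem neg {u : E → F} (hu : PolyGrowth u) : PolyGrowth fun x => -u x :=
  ⟨hu.continuous.neg, hu.exists_isBigO.imp fun _ h => h.neg_left⟩

@[fun_prop]
theorem sub {u v : E → F} (hu : PolyGrowth u) (hv : PolyGrowth v) :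
    PolyGrowth fun x => u x - v x := by
  simpa only [sub_eq_add_neg] using hu.add hv.neg

@[fun_prop]
theorem norm {u : E → F} (hu : PolyGrowth u) : PolyGrowth fun x => ‖u x‖ :=
  ⟨hu.continuous.norm, hu.exists_isBigO.imp fun _ h => h.norm_left⟩

@[fun_prop]
theorem smul [NormedSpace ℝ F] {u : E → ℝ} {v : E → F} (hu : PolyGrowth u) (hv : PolyGrowth v) :
    PolyGrowth fun x => u x • v x := by
  obtain ⟨k, hk⟩ := hu.exists_isBigO
  obtain ⟨l, hl⟩ := hv.exists_isBigO
  exact ⟨hu.continuous.smul hv.continuous, k + l, by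
    simp only [pow_add]
    exact hk.smul hl⟩

@[fun_prop]
theorem mul {u v : E → ℝ} (hu : PolyGrowth u) (hv : PolyGrowth v) :
    PolyGrowth fun x => u x * v x := hu.smul hv

@[fun_prop]
theorem div_const {u : E → ℝ} (hu : PolyGrowth u) (c : ℝ) : PolyGrowth fun x => u x / c := by
  simpa only [div_eq_mul_inv] using hu.mul (const c⁻¹)

@[fun_prop]
theorem pow {u : E → ℝ} (hu : PolyGrowth u) : ∀ k : ℕ, PolyGrowth fun x => u x ^ k
  | 0 => by simpa using const (1 : ℝ)
  | k + 1 => by simpa only [pow_succ] using (hu.pow k).mul hu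

@[fun_prop]
theorem inner [InnerProductSpace ℝ F] {u v : E → F} (hu : PolyGrowth u) (hv : PolyGrowth v) :
    PolyGrowth fun x => inner ℝ (u x) (v x) := by
  simp only [real_inner_eq_norm_add_mul_self_sub_norm_mul_self_sub_norm_mul_self_div_two]
  fun_prop

@[fun_prop]
theorem sum {ι : Type*} {t : Finset ι} {u : ι → E → F} (hu : ∀ i, PolyGrowth (u i)) :
    PolyGrowth fun x => ∑ i ∈ t, u i x := by
  classical
  induction t using Finset.induction_on with
  | empty => simpa using const 0
  | insert i t hi ih => simpa only [sum_insert hi] using (hu i).add ih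

@[fun_prop]
theorem expect {ι : Type*} {t : Finset ι} {u : ι → E → ℝ} (hu : ∀ i, PolyGrowth (u i)) :
    PolyGrowth fun x => 𝔼 i ∈ t, u i x := by
  simp only [expect_eq_sum_div_card]
  exact (sum hu).div_const _

end PolyGrowth

namespace SmoothTest

variable {q : ℝ} (S : SmoothTest q)

@[fun_prop]
theorem polyGrowth_f : PolyGrowth S.f :=
  .of_norm_le (continuous_iff_continuousAt.2 fun x => (S.hasDerivAt_f x).continuousAt) S.abs_f_le

@[fun_prop]
theorem polyGrowth_f₁ : PolyGrowth S.f₁ :=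
  .of_norm_le (continuous_iff_continuousAt.2 fun x => (S.hasDerivAt_f₁ x).continuousAt) S.abs_f₁_le

@[fun_prop]
theorem polyGrowth_f₂ : PolyGrowth S.f₂ :=
  .of_norm_le (continuous_iff_continuousAt.2 fun x => (S.hasDerivAt_f₂ x).continuousAt) S.abs_f₂_le

@[fun_prop]
theorem polyGrowth_χ : PolyGrowth S.χ :=
  .of_norm_le (continuous_iff_continuousAt.2 fun x => (S.hasDerivAt_χ x).continuousAt) S.abs_χ_le

theorem χ₁_nonneg (x : ℝ) : 0 ≤ S.χ₁ x := (abs_nonneg _).trans (S.abs_f₄_le x)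

@[fun_prop]
theorem polyGrowth_χ₁ : PolyGrowth S.χ₁ :=
  .of_norm_le S.continuous_χ₁ fun x => (abs_of_nonneg (S.χ₁_nonneg x)).trans_le (S.χ₁_le x)

variable {E : Type*} [NormedAddCommGroup E]

@[fun_prop]
theorem polyGrowth_stepTerm (τ : ℝ) {b l : E → ℝ} (hb : PolyGrowth b) (hl : PolyGrowth l) :
    PolyGrowth fun x => S.stepTerm τ (b x) (l x) := by
  unfold stepTerm
  fun_prop

end SmoothTest

end PolyGrowth

section Gaussian

open ProbabilityTheory Module

variable {E : Type*} [NormedAddCommGroup E] [InnerProductSpace ℝ E]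

variable (E) in
/-- The density of `stdGaussian E` with respect to the volume. -/
noncomputable def stdGaussianPDFReal (x : E) : ℝ :=
  (2 * π) ^ (-(finrank ℝ E / 2 : ℝ)) * rexp (-(1 / 2) * ‖x‖ ^ 2)

theorem stdGaussianPDFReal_nonneg (x : E) : 0 ≤ stdGaussianPDFReal E x := by
  unfold stdGaussianPDFReal; positivity

theorem continuous_stdGaussianPDFReal : Continuous (stdGaussianPDFReal E) := by
  unfold stdGaussianPDFReal; fun_prop

theorem norm_add_smul_sq (w : E) (c : ℝ) (x : E) :
    ‖w + c • x‖ ^ 2 = ‖w‖ ^ 2 + 2 * c * inner ℝ w x + c ^ 2 * ‖x‖ ^ 2 := by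
  rw [norm_add_sq_real, inner_smul_right, norm_smul, mul_pow, norm_eq_abs, sq_abs]
  ring

theorem hasFDerivAt_stdGaussianPDFReal (x : E) :
    HasFDerivAt (stdGaussianPDFReal E) (-stdGaussianPDFReal E x • innerSL ℝ x) x := by
  refine (((hasStrictFDerivAt_norm_sq x).hasFDerivAt.const_mul (-(1 / 2))).exp.const_mul
    ((2 * π) ^ (-(finrank ℝ E / 2 : ℝ)))).congr_fderiv ?_
  ext y
  simp [stdGaussianPDFReal]
  ring

variable [FiniteDimensional ℝ E] [MeasurableSpace E] [BorelSpace E]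

theorem PolyGrowth.integrable {F : Type*} [NormedAddCommGroup F] {u : E → F} (hu : PolyGrowth u) :
    Integrable u (stdGaussian E) := by
  obtain ⟨k, hk⟩ := hu.exists_isBigO
  obtain ⟨C, hC⟩ := Asymptotics.isBigO_top.1 hk
  have h : MemLp (fun x : E => 1 + ‖x‖) k (stdGaussian E) :=
    (memLp_const (1 : ℝ)).add (IsGaussian.memLp_id _ k (ENNReal.natCast_ne_top k)).norm
  refine (h.integrable_norm_pow'.const_mul C).mono' hu.continuous.aestronglyMeasurable
    (ae_of_all _ fun x => ?_)
  simpa using hC x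

theorem integral_stdGaussianPDFReal : ∫ x, stdGaussianPDFReal E x = 1 := by
  unfold stdGaussianPDFReal
  rw [integral_const_mul, GaussianFourier.integral_rexp_neg_mul_sq_norm (by norm_num),
    show π / (1 / 2) = 2 * π by ring, ← rpow_add (by positivity), neg_add_cancel, rpow_zero]

theorem integrable_stdGaussianPDFReal : Integrable (stdGaussianPDFReal E) :=
  .of_integral_ne_zero (by rw [integral_stdGaussianPDFReal]; exact one_ne_zero)

theorem stdGaussian_eq_withDensity :
    stdGaussian E = volume.withDensity fun x => ENNReal.ofReal (stdGaussianPDFReal E x) := by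
  have : IsFiniteMeasure (volume.withDensity fun x => ENNReal.ofReal (stdGaussianPDFReal E x)) :=
    isFiniteMeasure_withDensity_ofReal integrable_stdGaussianPDFReal.2
  refine Measure.ext_of_charFun (funext fun t => ?_)
  set a : ℝ := finrank ℝ E / 2 with ha
  have hfourier := GaussianFourier.integral_cexp_neg_mul_sq_norm_add (b := 1 / 2) (by norm_num)
    Complex.I t
  rw [show (π : ℂ) / (1 / 2) = (2 * π : ℝ) by push_cast; ring,
    show (finrank ℝ E / 2 : ℂ) = (a : ℝ) by push_cast [ha]; rfl,
    ← Complex.ofReal_cpow (by positivity)] at hfourier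
  rw [charFun_stdGaussian, charFun_apply, integral_withDensity_eq_integral_toReal_smul
    continuous_stdGaussianPDFReal.measurable.ennreal_ofReal (by simp)]
  symm
  calc ∫ x, (ENNReal.ofReal (stdGaussianPDFReal E x)).toReal • Complex.exp (inner ℝ x t * Complex.I)
      = ∫ x, ((2 * π) ^ (-a) : ℝ) *
          Complex.exp (-(1 / 2) * ‖x‖ ^ 2 + Complex.I * inner ℝ t x) := by
        refine integral_congr_ae (ae_of_all _ fun x => ?_)
        simp only [ENNReal.toReal_ofReal (stdGaussianPDFReal_nonneg x), Complex.real_smul,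
          Complex.exp_add, real_inner_comm t x]
        simp only [stdGaussianPDFReal, ← ha]
        push_cast
        ring_nf
    _ = ((2 * π) ^ (-a) * (2 * π) ^ a : ℝ) *
          Complex.exp (Complex.I ^ 2 * ‖t‖ ^ 2 / (4 * (1 / 2))) := by
        rw [integral_const_mul, hfourier, Complex.ofReal_mul, mul_assoc]
    _ = Complex.exp (-‖t‖ ^ 2 / 2) := by
        rw [← rpow_add (by positivity), neg_add_cancel, rpow_zero, Complex.I_sq]
        norm_num

theorem integral_stdGaussian (u : E → ℝ) :
    ∫ x, u x ∂stdGaussian E = ∫ x, stdGaussianPDFReal E x * u x := by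
  rw [stdGaussian_eq_withDensity, integral_withDensity_eq_integral_toReal_smul
    continuous_stdGaussianPDFReal.measurable.ennreal_ofReal (by simp)]
  simp [ENNReal.toReal_ofReal (stdGaussianPDFReal_nonneg _)]

theorem integrable_stdGaussian_iff {u : E → ℝ} :
    Integrable u (stdGaussian E) ↔ Integrable fun x => stdGaussianPDFReal E x * u x := by
  rw [stdGaussian_eq_withDensity, integrable_withDensity_iff_integrable_smul₀'
    continuous_stdGaussianPDFReal.measurable.ennreal_ofReal.aemeasurable (by simp)]
  simp [ENNReal.toReal_ofReal (stdGaussianPDFReal_nonneg _)]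

theorem integral_mul_inner_stdGaussian {u : E → ℝ} {u' : E → E →L[ℝ] ℝ} (v : E)
    (hu : ∀ x, HasFDerivAt u (u' x) x) (hg : PolyGrowth u) (hg' : PolyGrowth fun x => u' x v) :
    ∫ x, u x * inner ℝ x v ∂stdGaussian E = ∫ x, u' x v ∂stdGaussian E := by
  have hfd (x : E) : fderiv ℝ (stdGaussianPDFReal E) x v
      = -(stdGaussianPDFReal E x * inner ℝ x v) := by
    simp [(hasFDerivAt_stdGaussianPDFReal x).fderiv]
  have hint {w : E → ℝ} (hw : PolyGrowth w) : Integrable fun x => stdGaussianPDFReal E x * w x :=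
    integrable_stdGaussian_iff.1 hw.integrable
  have key := integral_mul_fderiv_eq_neg_fderiv_mul_of_integrable (μ := (volume : Measure E))
    (f := stdGaussianPDFReal E) (g := u) (v := v)
    (by
      simp only [hfd, neg_mul, mul_assoc]
      exact (hint (w := fun x => inner ℝ x v * u x) (by fun_prop)).neg)
    (by simpa only [(hu _).fderiv] using hint hg') (hint hg)
    (fun x _ => (hasFDerivAt_stdGaussianPDFReal x).differentiableAt)
    (fun x _ => (hu x).differentiableAt)
  simp only [(hu _).fderiv, hfd, neg_mul, integral_neg, neg_neg] at key
  rw [integral_stdGaussian, integral_stdGaussian, key]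
  simp only [mul_assoc, mul_comm (u _)]

section Affine

variable {φ φ' : ℝ → ℝ} (w : E) (c : ℝ)

theorem integral_radial_mul_inner_mul_inner (hφ : ∀ t, HasDerivAt φ (φ' t) t) (hg : PolyGrowth φ)
    (hg' : PolyGrowth φ') (v : E) :
    ∫ x, φ (‖w + c • x‖ ^ 2) * inner ℝ (w + c • x) v * inner ℝ x v ∂stdGaussian E
      = c * ∫ x, φ (‖w + c • x‖ ^ 2) * ‖v‖ ^ 2
        + 2 * φ' (‖w + c • x‖ ^ 2) * inner ℝ (w + c • x) v ^ 2 ∂stdGaussian E := by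
  have haff (x : E) : HasFDerivAt (fun x : E => w + c • x) (c • ContinuousLinearMap.id ℝ E) x :=
    ((hasFDerivAt_id x).const_smul c).const_add w
  refine (integral_mul_inner_stdGaussian v (fun x => ((hφ _).comp_hasFDerivAt x
    (haff x).norm_sq).fun_mul ((haff x).inner ℝ (hasFDerivAt_const v x))) ?_ ?_).trans ?_
  · exact (hg.comp (by fun_prop)).mul (by fun_prop)
  · simp only [map_add, map_smul, ContinuousLinearMap.comp_smulₛₗ, RingHom.id_apply,
      ContinuousLinearMap.comp_id, smul_add, add_apply, smul_apply, zero_apply,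
      ContinuousLinearMap.comp_apply, ContinuousLinearMap.prod_apply,
      ContinuousLinearMap.id_apply, fderivInnerCLM_apply, inner_zero_right, zero_add, smul_eq_mul,
      coe_innerSL_apply, nsmul_eq_mul, Nat.cast_ofNat, Function.comp_apply]
    fun_prop
  · rw [← integral_const_mul]
    refine integral_congr_ae (ae_of_all _ fun x => ?_)
    simp [inner_add_left, real_inner_smul_left]
    ring

theorem integral_radial_mul_inner (hφ : ∀ t, HasDerivAt φ (φ' t) t) (hg : PolyGrowth φ)
    (hg' : PolyGrowth φ') :
    ∫ x, φ (‖w + c • x‖ ^ 2) * inner ℝ (w + c • x) x ∂stdGaussian E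
      = c * ∫ x, finrank ℝ E * φ (‖w + c • x‖ ^ 2)
        + 2 * φ' (‖w + c • x‖ ^ 2) * ‖w + c • x‖ ^ 2 ∂stdGaussian E := by
  let e := stdOrthonormalBasis ℝ E
  calc ∫ x, φ (‖w + c • x‖ ^ 2) * inner ℝ (w + c • x) x ∂stdGaussian E
      = ∫ x, ∑ i, φ (‖w + c • x‖ ^ 2) * inner ℝ (w + c • x) (e i) * inner ℝ x (e i)
          ∂stdGaussian E := by
        refine integral_congr_ae (ae_of_all _ fun x => ?_)
        simp only [mul_assoc, ← mul_sum, real_inner_comm _ x, e.sum_inner_mul_inner]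
    _ = ∑ i, ∫ x, φ (‖w + c • x‖ ^ 2) * inner ℝ (w + c • x) (e i) * inner ℝ x (e i)
          ∂stdGaussian E := integral_finsetSum _ fun i _ => PolyGrowth.integrable (by fun_prop)
    _ = c * ∫ x, ∑ i, (φ (‖w + c • x‖ ^ 2) * ‖e i‖ ^ 2
          + 2 * φ' (‖w + c • x‖ ^ 2) * inner ℝ (w + c • x) (e i) ^ 2) ∂stdGaussian E := by
        rw [integral_finsetSum _ fun i _ => PolyGrowth.integrable (by fun_prop), mul_sum]
        simp only [integral_radial_mul_inner_mul_inner w c hφ hg hg']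
    _ = _ := by
        congr 1
        refine integral_congr_ae (ae_of_all _ fun x => ?_)
        simp only [sum_add_distrib, ← mul_sum, e.norm_eq_one, one_pow, mul_one, sum_const,
          card_univ, Fintype.card_fin, nsmul_eq_mul, e.sum_sq_inner_left]

end Affine

section Moments

theorem integral_inner_stdGaussian (w : E) : ∫ x, inner ℝ w x ∂stdGaussian E = 0 :=
  integral_strongDual_stdGaussian (innerSL ℝ w)

theorem integral_inner_sq_stdGaussian (w : E) : ∫ x, inner ℝ w x ^ 2 ∂stdGaussian E = ‖w‖ ^ 2 := by
  have h := integral_mul_inner_stdGaussian (u := fun x : E => inner ℝ w x) w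
    (fun x => (innerSL ℝ w).hasFDerivAt) (by fun_prop)
    (by simp only [coe_innerSL_apply]; fun_prop)
  simpa [← sq, real_inner_comm w] using h

theorem integral_norm_sq_stdGaussian : ∫ x, ‖x‖ ^ 2 ∂stdGaussian E = finrank ℝ E := by
  simpa using integral_radial_mul_inner (φ := fun _ => 1) (0 : E) 1 (fun t => hasDerivAt_const t _)
    (by fun_prop) (by fun_prop)

theorem integral_norm_pow_four_stdGaussian :
    ∫ x, (‖x‖ ^ 2) ^ 2 ∂stdGaussian E = (finrank ℝ E + 2) * finrank ℝ E := by
  have h := integral_radial_mul_inner (φ := fun t => t) (0 : E) 1 (fun t => hasDerivAt_id' t)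
    (by fun_prop) (by fun_prop)
  simpa [← sq, ← add_mul, integral_const_mul, integral_norm_sq_stdGaussian] using h

theorem integral_norm_sq_mul_inner_stdGaussian (w : E) :
    ∫ x, ‖x‖ ^ 2 * inner ℝ w x ∂stdGaussian E = 0 := by
  have h := integral_mul_inner_stdGaussian (u := fun x : E => ‖x‖ ^ 2) w
    (fun x => (hasFDerivAt_id x).norm_sq) (by fun_prop)
    (by simp only [id_eq, ContinuousLinearMap.comp_id, smul_apply,
      coe_innerSL_apply, nsmul_eq_mul, Nat.cast_ofNat]; fun_prop)
  simpa [real_inner_comm w, integral_const_mul, integral_inner_stdGaussian] using h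

end Moments

end Gaussian

namespace NearGaussianMoments

variable {P : Type*} [Fintype P] [Nonempty P] {L : P → ℝ} {B : ℝ}

theorem expect_affine_sq (hL : NearGaussianMoments L B) (b τ : ℝ) :
    𝔼 p, (b + 2 * τ * L p) ^ 2 = b ^ 2 + 4 * τ ^ 2 * B := by
  rw [← hL.expect_cubic (b ^ 2) (4 * b * τ) (4 * τ ^ 2) 0]
  exact expect_congr rfl fun p _ => by ring

theorem pow_le_expect_affine_pow (hL : NearGaussianMoments L B) {b : ℝ} (hb : 0 ≤ b) (τ : ℝ) {k : ℕ}
    (hk : k ≤ 3) : b ^ k ≤ 𝔼 p, (b + 2 * τ * L p) ^ k := by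
  have hB := hL.nonneg
  interval_cases k
  · simp
  · simp [expect_add_distrib, ← mul_expect, hL.expect]
  · rw [hL.expect_affine_sq]
    exact le_add_of_nonneg_right (by positivity)
  · calc b ^ 3 ≤ b ^ 3 + 12 * b * τ ^ 2 * B := le_add_of_nonneg_right (by positivity)
      _ = 𝔼 p, (b ^ 3 + 6 * b ^ 2 * τ * L p + 12 * b * τ ^ 2 * L p ^ 2 + 8 * τ ^ 3 * L p ^ 3) :=
        (hL.expect_cubic ..).symm
      _ = _ := expect_congr rfl fun p _ => by ring

theorem expect_affine_pow_mul_le (hL : NearGaussianMoments L B) {D b τ : ℝ} (hD : 0 ≤ D)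
    (hb : b = B + τ ^ 2 * D) {k : ℕ} (hk : k ≤ 2) :
    𝔼 p, (b + 2 * τ * L p) ^ k * (τ * (L p + τ * D))
      ≤ τ ^ 2 * (D + 2 * k) * 𝔼 p, (b + 2 * τ * L p) ^ k := by
  have hB := hL.nonneg
  interval_cases k
  · simp [expect_add_distrib, ← mul_expect, hL.expect]
    linarith
  · calc 𝔼 p, (b + 2 * τ * L p) ^ 1 * (τ * (L p + τ * D))
        = 𝔼 p, (b * τ ^ 2 * D + (b * τ + 2 * τ ^ 3 * D) * L p + 2 * τ ^ 2 * L p ^ 2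
          + 0 * L p ^ 3) := expect_congr rfl fun p _ => by ring
      _ = b * τ ^ 2 * D + 2 * τ ^ 2 * B := hL.expect_cubic ..
      _ ≤ τ ^ 2 * (D + 2 * (1 : ℕ)) * b := by
        have : 0 ≤ τ ^ 2 * (τ ^ 2 * D) := by positivity
        push_cast
        linear_combination 2 * this - 2 * τ ^ 2 * hb
      _ = _ := by simp [expect_add_distrib, ← mul_expect, hL.expect]
  · calc 𝔼 p, (b + 2 * τ * L p) ^ 2 * (τ * (L p + τ * D))
        = 𝔼 p, (b ^ 2 * τ ^ 2 * D + (b ^ 2 * τ + 4 * b * τ ^ 3 * D) * L p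
          + (4 * b * τ ^ 2 + 4 * τ ^ 4 * D) * L p ^ 2 + 4 * τ ^ 3 * L p ^ 3) :=
          expect_congr rfl fun p _ => by ring
      _ = b ^ 2 * τ ^ 2 * D + (4 * b * τ ^ 2 + 4 * τ ^ 4 * D) * B := hL.expect_cubic ..
      _ ≤ τ ^ 2 * (D + 2 * (2 : ℕ)) * (b ^ 2 + 4 * τ ^ 2 * B) := by
        have : 0 ≤ τ ^ 2 * (b * (τ ^ 2 * D)) + 4 * (τ ^ 4 * B) := by
          rw [hb]
          positivity
        push_cast
        linear_combination 4 * this - 4 * b * τ ^ 2 * hb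
      _ = _ := by rw [hL.expect_affine_sq]

end NearGaussianMoments

section Mean

open ProbabilityTheory

variable {E ι P : Type*} [NormedAddCommGroup E] [InnerProductSpace ℝ E] [FiniteDimensional ℝ E]
  [MeasurableSpace E] [Fintype ι] [Fintype P]

theorem expect_update {M : Type*} [AddCommMonoid M] [Module ℚ≥0 M] [Nonempty P] [DecidableEq ι]
    (Φ : (ι → P) → M) (i : ι) : 𝔼 ω, 𝔼 p, Φ (Function.update ω i p) = 𝔼 ω, Φ ω := by
  have h : 𝔼 z : (ι → P) × P, Φ (Function.update z.1 i z.2) = 𝔼 z : (ι → P) × P, Φ z.1 :=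
    Fintype.expect_equiv
      { toFun := fun z => (Function.update z.1 i z.2, z.1 i)
        invFun := fun z => (Function.update z.1 i z.2, z.1 i)
        left_inv := fun z => by simp
        right_inv := fun z => by simp } _ _ fun z => rfl
  rw [← univ_product_univ, expect_product, expect_product] at h
  simpa only [expect_const univ_nonempty] using h

theorem integral_expect {κ α : Type*} [Fintype κ] [MeasurableSpace α] {μ : Measure α}
    {u : κ → α → ℝ} (h : ∀ i, Integrable (u i) μ) :
    ∫ x, 𝔼 i, u i x ∂μ = 𝔼 i, ∫ x, u i x ∂μ := by
  simp only [Fintype.expect_eq_sum_div_card, integral_div, integral_finsetSum _ fun i _ => h i]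

variable [DecidableEq ι]

/-- The expectation of a function of a family of independent uniform samples from `P`, indexed by
`ι`, and of an independent standard Gaussian vector of `E`. -/
noncomputable def mean (Φ : (ι → P) → E → ℝ) : ℝ := 𝔼 ω, ∫ g, Φ ω g ∂stdGaussian E

variable {Φ Ψ : (ι → P) → E → ℝ}

theorem mean_const_mul (c : ℝ) (Φ : (ι → P) → E → ℝ) :
    mean (fun ω g => c * Φ ω g) = c * mean Φ := by
  simp only [mean, integral_const_mul, mul_expect]

variable [BorelSpace E]

theorem mean_add (hΦ : ∀ ω, PolyGrowth (Φ ω)) (hΨ : ∀ ω, PolyGrowth (Ψ ω)) :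
    mean (fun ω g => Φ ω g + Ψ ω g) = mean Φ + mean Ψ := by
  simp only [mean, ← expect_add_distrib, integral_add (hΦ _).integrable (hΨ _).integrable]

theorem mean_sub (hΦ : ∀ ω, PolyGrowth (Φ ω)) (hΨ : ∀ ω, PolyGrowth (Ψ ω)) :
    mean (fun ω g => Φ ω g - Ψ ω g) = mean Φ - mean Ψ := by
  simp only [mean, ← expect_sub_distrib, integral_sub (hΦ _).integrable (hΨ _).integrable]

theorem mean_sum {κ : Type*} (t : Finset κ) {Φ : κ → (ι → P) → E → ℝ}
    (hΦ : ∀ i ω, PolyGrowth (Φ i ω)) :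
    mean (fun ω g => ∑ i ∈ t, Φ i ω g) = ∑ i ∈ t, mean (Φ i) := by
  simp only [mean, ← expect_sum_comm, integral_finsetSum _ fun i _ => (hΦ i _).integrable]

theorem mean_mono (hΦ : ∀ ω, PolyGrowth (Φ ω)) (hΨ : ∀ ω, PolyGrowth (Ψ ω))
    (h : ∀ ω g, Φ ω g ≤ Ψ ω g) : mean Φ ≤ mean Ψ :=
  expect_le_expect fun ω _ => integral_mono (hΦ ω).integrable (hΨ ω).integrable (h ω)

theorem abs_mean_le (hΦ : ∀ ω, PolyGrowth (Φ ω)) (hΨ : ∀ ω, PolyGrowth (Ψ ω))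
    (h : ∀ ω g, |Φ ω g| ≤ Ψ ω g) : |mean Φ| ≤ mean Ψ := by
  rw [abs_le, neg_eq_neg_one_mul, ← mean_const_mul]
  exact ⟨mean_mono (fun ω => by fun_prop) hΦ fun ω g => by linarith [(abs_le.1 (h ω g)).1],
    mean_mono hΦ hΨ fun ω g => (abs_le.1 (h ω g)).2⟩

variable [Nonempty P]

theorem mean_const (c : ℝ) : mean (fun (_ : ι → P) (_ : E) => c) = c := by
  simp [mean, expect_const univ_nonempty]

theorem mean_update (hΦ : ∀ ω, PolyGrowth (Φ ω)) (i : ι) :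
    mean (fun ω g => 𝔼 p, Φ (Function.update ω i p) g) = mean Φ := by
  simp only [mean, integral_expect fun _ => (hΦ _).integrable,
    expect_update (fun ω => ∫ g, Φ ω g ∂stdGaussian E)]

end Mean

section Design

open ProbabilityTheory Module

variable {E ι P : Type*} [NormedAddCommGroup E] [InnerProductSpace ℝ E] [Fintype ι]

/-- The interpolation between a sum of samples of `x` and a vector `g`, with weights `τ` and
`c`. -/
def interp (x : P → E) (τ c : ℝ) (ω : ι → P) (g : E) : E := τ • ∑ i, x (ω i) + c • g

@[fun_prop]
theorem polyGrowth_interp (x : P → E) (τ c : ℝ) (ω : ι → P) :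
    PolyGrowth fun g => interp x τ c ω g := by
  unfold interp
  fun_prop

theorem norm_interp_sq (x : P → E) (τ c : ℝ) (ω : ι → P) (g : E) :
    ‖interp x τ c ω g‖ ^ 2
      = ∑ i, τ * inner ℝ (interp x τ c ω g) (x (ω i)) + c * inner ℝ (interp x τ c ω g) g := by
  rw [← real_inner_self_eq_norm_sq]
  nth_rw 2 [interp]
  rw [inner_add_right, real_inner_smul_right, real_inner_smul_right, inner_sum, mul_sum]

section Update

variable [DecidableEq ι]

/-- The interpolation `interp x τ c ω g` with the `i`-th sample left out. -/
def interpErase (x : P → E) (τ c : ℝ) (i : ι) (ω : ι → P) (g : E) : E :=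
  τ • ∑ j ∈ univ.erase i, x (ω j) + c • g

@[fun_prop]
theorem polyGrowth_interpErase (x : P → E) (τ c : ℝ) (i : ι) (ω : ι → P) :
    PolyGrowth fun g => interpErase x τ c i ω g := by
  unfold interpErase
  fun_prop

theorem interp_update (x : P → E) (τ c : ℝ) (i : ι) (ω : ι → P) (p : P) (g : E) :
    interp x τ c (Function.update ω i p) g = interpErase x τ c i ω g + τ • x p := by
  unfold interp interpErase
  rw [← add_sum_erase univ _ (mem_univ i), Function.update_self,
    sum_congr rfl fun j hj => by rw [Function.update_of_ne (ne_of_mem_erase hj)], smul_add]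
  abel

/-- The squared norm of `interp x τ c ω g` up to the term linear in the `i`-th sample, which is
assumed to have squared norm `finrank ℝ E`. -/
noncomputable def shiftedSq (x : P → E) (τ c : ℝ) (i : ι) (ω : ι → P) (g : E) : ℝ :=
  ‖interpErase x τ c i ω g‖ ^ 2 + τ ^ 2 * finrank ℝ E

theorem shiftedSq_nonneg (x : P → E) (τ c : ℝ) (i : ι) (ω : ι → P) (g : E) :
    0 ≤ shiftedSq x τ c i ω g := by
  unfold shiftedSq
  positivity

@[fun_prop]
theorem polyGrowth_shiftedSq (x : P → E) (τ c : ℝ) (i : ι) (ω : ι → P) :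
    PolyGrowth fun g => shiftedSq x τ c i ω g := by
  unfold shiftedSq
  fun_prop

end Update

variable [Fintype P]

/-- A finite family of vectors of squared norm `dim E` whose one-dimensional marginals have
near-Gaussian moments; in particular the family is centred and isotropic. -/
structure IsDesign (x : P → E) : Prop where
  norm_sq : ∀ p, ‖x p‖ ^ 2 = finrank ℝ E
  nearGaussian : ∀ w, NearGaussianMoments (fun p => inner ℝ w (x p)) (‖w‖ ^ 2)

variable {x : P → E} {τ c : ℝ} [DecidableEq ι]

namespace IsDesign

theorem inner_interp_update (hx : IsDesign x) (i : ι) (ω : ι → P) (p : P) (g : E) :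
    inner ℝ (interp x τ c (Function.update ω i p) g) (x p)
      = inner ℝ (interpErase x τ c i ω g) (x p) + τ * finrank ℝ E := by
  rw [interp_update, inner_add_left, real_inner_smul_left, real_inner_self_eq_norm_sq, hx.norm_sq]

theorem norm_interp_update_sq (hx : IsDesign x) (i : ι) (ω : ι → P) (p : P) (g : E) :
    ‖interp x τ c (Function.update ω i p) g‖ ^ 2
      = shiftedSq x τ c i ω g + 2 * τ * inner ℝ (interpErase x τ c i ω g) (x p) := by
  rw [interp_update, norm_add_smul_sq, hx.norm_sq, shiftedSq]
  ring

end IsDesign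

variable [FiniteDimensional ℝ E] [MeasurableSpace E] [BorelSpace E]

theorem mean_radial_mul_inner_gaussian {φ φ' : ℝ → ℝ} (hφ : ∀ t, HasDerivAt φ (φ' t) t)
    (hg : PolyGrowth φ) (hg' : PolyGrowth φ') (x : P → E) (τ c : ℝ) :
    mean (fun (ω : ι → P) g => φ (‖interp x τ c ω g‖ ^ 2) * inner ℝ (interp x τ c ω g) g)
      = c * mean fun (ω : ι → P) g => finrank ℝ E * φ (‖interp x τ c ω g‖ ^ 2)
        + 2 * φ' (‖interp x τ c ω g‖ ^ 2) * ‖interp x τ c ω g‖ ^ 2 := by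
  simp only [mean, mul_expect, interp, integral_radial_mul_inner _ c hφ hg hg']

theorem mean_pow_mul_inner_gaussian (x : P → E) (τ c : ℝ) (k : ℕ) :
    mean (fun (ω : ι → P) g => (‖interp x τ c ω g‖ ^ 2) ^ k * inner ℝ (interp x τ c ω g) g)
      = c * ((finrank ℝ E + 2 * k)
        * mean fun (ω : ι → P) g => (‖interp x τ c ω g‖ ^ 2) ^ k) := by
  have hk (d t : ℝ) : d * t ^ k + 2 * (k * t ^ (k - 1)) * t = (d + 2 * k) * t ^ k := by
    rcases k with _ | k
    · simp
    · simp only [Nat.add_sub_cancel]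
      ring
  rw [mean_radial_mul_inner_gaussian (fun t => hasDerivAt_pow k t) (by fun_prop) (by fun_prop),
    ← mean_const_mul]
  simp only [hk, mean_const_mul]

variable [Nonempty P]

namespace IsDesign

theorem mean_shiftedSq_pow_le (hx : IsDesign x) (i : ι) {k : ℕ} (hk : k ≤ 3) :
    mean (fun (ω : ι → P) g => shiftedSq x τ c i ω g ^ k)
      ≤ mean fun (ω : ι → P) g => (‖interp x τ c ω g‖ ^ 2) ^ k := by
  rw [← mean_update (Φ := fun ω g => (‖interp x τ c ω g‖ ^ 2) ^ k) (fun ω => by fun_prop) i]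
  refine mean_mono (fun ω => by fun_prop) (fun ω => by fun_prop) fun ω g => ?_
  simp only [hx.norm_interp_update_sq]
  exact (hx.nearGaussian _).pow_le_expect_affine_pow (shiftedSq_nonneg ..) τ hk

theorem mean_pow_mul_inner_le (hx : IsDesign x) (i : ι) {k : ℕ} (hk : k ≤ 2) :
    mean (fun (ω : ι → P) g => (‖interp x τ c ω g‖ ^ 2) ^ k *
        (τ * inner ℝ (interp x τ c ω g) (x (ω i))))
      ≤ τ ^ 2 * (finrank ℝ E + 2 * k)
        * mean fun (ω : ι → P) g => (‖interp x τ c ω g‖ ^ 2) ^ k := by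
  rw [← mean_update (fun ω => by fun_prop) i,
    ← mean_update (Φ := fun ω g => (‖interp x τ c ω g‖ ^ 2) ^ k) (fun ω => by fun_prop) i,
    ← mean_const_mul]
  refine mean_mono (fun ω => by fun_prop) (fun ω => by fun_prop) fun ω g => ?_
  simp only [hx.norm_interp_update_sq, Function.update_self, hx.inner_interp_update]
  exact (hx.nearGaussian _).expect_affine_pow_mul_le (Nat.cast_nonneg _) rfl hk

theorem mean_pow_succ_le (hx : IsDesign x) (h : Fintype.card ι * τ ^ 2 + c ^ 2 = 1) {k : ℕ}
    (hk : k ≤ 2) :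
    mean (fun (ω : ι → P) g => (‖interp x τ c ω g‖ ^ 2) ^ (k + 1))
      ≤ (finrank ℝ E + 2 * k) * mean fun (ω : ι → P) g => (‖interp x τ c ω g‖ ^ 2) ^ k := by
  set M := mean fun (ω : ι → P) g => (‖interp x τ c ω g‖ ^ 2) ^ k
  calc mean (fun (ω : ι → P) g => (‖interp x τ c ω g‖ ^ 2) ^ (k + 1))
      = mean fun (ω : ι → P) g => (∑ i, (‖interp x τ c ω g‖ ^ 2) ^ k
          * (τ * inner ℝ (interp x τ c ω g) (x (ω i))))
          + c * ((‖interp x τ c ω g‖ ^ 2) ^ k * inner ℝ (interp x τ c ω g) g) := by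
        congr! 3 with ω g
        rw [← mul_sum, mul_left_comm, ← mul_add, ← norm_interp_sq, pow_succ]
    _ = (∑ i, mean fun (ω : ι → P) g => (‖interp x τ c ω g‖ ^ 2) ^ k
          * (τ * inner ℝ (interp x τ c ω g) (x (ω i))))
          + c * (c * ((finrank ℝ E + 2 * k) * M)) := by
        rw [mean_add (fun ω => by fun_prop) (fun ω => by fun_prop),
          mean_sum _ fun i ω => by fun_prop, mean_const_mul, mean_pow_mul_inner_gaussian]
    _ ≤ ∑ _i : ι, τ ^ 2 * (finrank ℝ E + 2 * k) * M + c * (c * ((finrank ℝ E + 2 * k) * M)) := by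
        gcongr with i
        exact hx.mean_pow_mul_inner_le i hk
    _ = (Fintype.card ι * τ ^ 2 + c ^ 2) * ((finrank ℝ E + 2 * k) * M) := by
        simp only [sum_const, card_univ, nsmul_eq_mul]
        ring
    _ = _ := by rw [h, one_mul]

theorem mean_norm_sq_le (hx : IsDesign x) (h : Fintype.card ι * τ ^ 2 + c ^ 2 = 1) :
    mean (fun (ω : ι → P) g => ‖interp x τ c ω g‖ ^ 2) ≤ finrank ℝ E := by
  simpa [mean_const] using hx.mean_pow_succ_le h (k := 0) zero_le_two

theorem mean_norm_sq_sq_le (hx : IsDesign x) (h : Fintype.card ι * τ ^ 2 + c ^ 2 = 1) :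
    mean (fun (ω : ι → P) g => (‖interp x τ c ω g‖ ^ 2) ^ 2)
      ≤ (finrank ℝ E + 2) * finrank ℝ E := by
  have h2 := hx.mean_pow_succ_le h one_le_two
  simp only [pow_one, Nat.cast_one, mul_one] at h2
  exact h2.trans (mul_le_mul_of_nonneg_left (hx.mean_norm_sq_le h) (by positivity))

theorem mean_norm_sq_cube_le (hx : IsDesign x) (h : Fintype.card ι * τ ^ 2 + c ^ 2 = 1) :
    mean (fun (ω : ι → P) g => (‖interp x τ c ω g‖ ^ 2) ^ 3)
      ≤ (finrank ℝ E + 4) * ((finrank ℝ E + 2) * finrank ℝ E) := by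
  have h3 := hx.mean_pow_succ_le h le_rfl
  norm_num at h3
  exact h3.trans (mul_le_mul_of_nonneg_left (hx.mean_norm_sq_sq_le h) (by positivity))

end IsDesign

end Design

section Localization

open ProbabilityTheory Module

variable {E : Type*} [NormedAddCommGroup E] [InnerProductSpace ℝ E] [FiniteDimensional ℝ E]
  [MeasurableSpace E] [BorelSpace E]

theorem integral_norm_add_smul_sq (w : E) (c : ℝ) :
    ∫ x, ‖w + c • x‖ ^ 2 ∂stdGaussian E = ‖w‖ ^ 2 + c ^ 2 * finrank ℝ E := by
  simp only [norm_add_smul_sq]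
  rw [integral_add (PolyGrowth.integrable (by fun_prop)) (PolyGrowth.integrable (by fun_prop)),
    integral_add (PolyGrowth.integrable (by fun_prop)) (PolyGrowth.integrable (by fun_prop))]
  simp [integral_const_mul, integral_inner_stdGaussian, integral_norm_sq_stdGaussian]

theorem integral_inner_sub_sq (w : E) (c : ℝ) :
    ∫ x, (inner ℝ (w + c • x) x - c * finrank ℝ E) ^ 2 ∂stdGaussian E
      = (∫ x, ‖w + c • x‖ ^ 2 ∂stdGaussian E) + c ^ 2 * finrank ℝ E := by
  let d : ℝ := finrank ℝ E
  calc ∫ x, (inner ℝ (w + c • x) x - c * d) ^ 2 ∂stdGaussian E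
      = ∫ x, (inner ℝ w x ^ 2 + (2 * c) * (‖x‖ ^ 2 * inner ℝ w x))
          + (c ^ 2 * (‖x‖ ^ 2) ^ 2 + (-2 * c * d) * inner ℝ w x)
          + ((-2 * c ^ 2 * d) * ‖x‖ ^ 2 + c ^ 2 * d ^ 2) ∂stdGaussian E := by
        refine integral_congr_ae (ae_of_all _ fun x => ?_)
        simp only [inner_add_left, real_inner_smul_left, real_inner_self_eq_norm_sq]
        ring
    _ = ‖w‖ ^ 2 + 2 * c * 0 + (c ^ 2 * ((d + 2) * d) + -2 * c * d * 0)
          + (-2 * c ^ 2 * d * d + c ^ 2 * d ^ 2) := by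
        rw [integral_add, integral_add, integral_add, integral_add, integral_add]
        · simp only [integral_const_mul, integral_inner_stdGaussian, integral_inner_sq_stdGaussian,
            integral_norm_sq_stdGaussian, integral_norm_pow_four_stdGaussian,
            integral_norm_sq_mul_inner_stdGaussian, integral_const, probReal_univ, one_smul, d]
        all_goals exact PolyGrowth.integrable (by fun_prop)
    _ = _ := by
        rw [integral_norm_add_smul_sq]
        ring

namespace SmoothTest

variable {q : ℝ} (S : SmoothTest q)

theorem integral_χ₁_eq (w : E) (c k : ℝ) :
    2 * c * ∫ x, (‖w + c • x‖ ^ 2 + k) * ‖w + c • x‖ ^ 2 * S.χ₁ (‖w + c • x‖ ^ 2 + k) ∂stdGaussian E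
      = ∫ x, S.χ (‖w + c • x‖ ^ 2 + k) * ((‖w + c • x‖ ^ 2 + k)
        * (inner ℝ (w + c • x) x - c * finrank ℝ E) - 2 * c * ‖w + c • x‖ ^ 2) ∂stdGaussian E := by
  have ibp := integral_radial_mul_inner (E := E) (φ := fun t => S.χ (t + k) * (t + k))
    (φ' := fun t => S.χ₁ (t + k) * (t + k) + S.χ (t + k)) w c
    (fun t => (((S.hasDerivAt_χ (t + k)).comp_add_const t k).mul
      ((hasDerivAt_id t).add_const k)).congr_deriv (by simp)) (by fun_prop) (by fun_prop)
  rw [← integral_const_mul, ← sub_eq_zero, ← integral_sub (PolyGrowth.integrable (by fun_prop))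
    (PolyGrowth.integrable (by fun_prop))] at ibp
  rw [← integral_const_mul, ← add_zero (∫ x, _ ∂_), ← ibp,
    ← integral_add (PolyGrowth.integrable (by fun_prop)) (PolyGrowth.integrable (by fun_prop))]
  refine integral_congr_ae (ae_of_all _ fun x => ?_)
  ring

theorem χ_mul_sub_le {b B c D e : ℝ} (hq : 0 ≤ q) (hb : 0 ≤ b) (hB : 0 ≤ B) (hc : 0 ≤ c)
    (he : 0 < e) :
    S.χ b * (b * D - 2 * c * B)
      ≤ 4 * q ^ 3 * (1 / (2 * e) * b ^ 2 + e / 2 * D ^ 2 + 2 * c * B) := by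
  have young : b * |D| ≤ 1 / (2 * e) * b ^ 2 + e / 2 * |D| ^ 2 := by
    have h : 0 ≤ (b - e * |D|) ^ 2 / (2 * e) := by positivity
    refine sub_nonneg.1 (h.trans_eq ?_)
    field_simp
    ring
  calc S.χ b * (b * D - 2 * c * B) ≤ |S.χ b| * |b * D - 2 * c * B| := by
        rw [← abs_mul]
        exact le_abs_self _
    _ ≤ 4 * q ^ 3 * (b * |D| + 2 * c * B) := by
        gcongr
        · exact S.abs_χ_le _
        · refine (abs_sub _ _).trans_eq ?_
          rw [abs_mul, abs_of_nonneg hb, abs_of_nonneg (by positivity : 0 ≤ 2 * c * B)]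
    _ ≤ _ := by
        rw [← sq_abs D]
        gcongr

theorem integral_χ₁_le (hq : 0 ≤ q) (w : E) {c k e : ℝ} (hc : 0 ≤ c) (hk : 0 ≤ k) (he : 0 < e) :
    2 * c * ∫ x, (‖w + c • x‖ ^ 2 + k) * ‖w + c • x‖ ^ 2 * S.χ₁ (‖w + c • x‖ ^ 2 + k) ∂stdGaussian E
      ≤ 4 * q ^ 3 * (1 / (2 * e) * (∫ x, (‖w + c • x‖ ^ 2 + k) ^ 2 ∂stdGaussian E)
        + e / 2 * ((∫ x, ‖w + c • x‖ ^ 2 ∂stdGaussian E) + c ^ 2 * finrank ℝ E)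
        + 2 * c * ∫ x, ‖w + c • x‖ ^ 2 ∂stdGaussian E) := by
  rw [integral_χ₁_eq, ← integral_inner_sub_sq]
  simp only [← integral_const_mul]
  rw [← integral_add (PolyGrowth.integrable (by fun_prop)) (PolyGrowth.integrable (by fun_prop)),
    ← integral_add (PolyGrowth.integrable (by fun_prop)) (PolyGrowth.integrable (by fun_prop)),
    ← integral_const_mul]
  exact integral_mono (PolyGrowth.integrable (by fun_prop)) (PolyGrowth.integrable (by fun_prop))
    fun x => S.χ_mul_sub_le hq (by positivity) (by positivity) hc he

end SmoothTest

variable {ι P : Type*} [Fintype ι] [DecidableEq ι] [Fintype P] [Nonempty P] {x : P → E} {τ c q : ℝ}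

theorem SmoothTest.mean_χ₁_le (S : SmoothTest q) (hq : 0 ≤ q) (x : P → E) (τ : ℝ) (hc : 0 ≤ c)
    (i : ι) {e : ℝ} (he : 0 < e) :
    2 * c * mean (fun (ω : ι → P) g => shiftedSq x τ c i ω g * ‖interpErase x τ c i ω g‖ ^ 2
        * S.χ₁ (shiftedSq x τ c i ω g))
      ≤ 4 * q ^ 3 * (1 / (2 * e) * mean (fun (ω : ι → P) g => shiftedSq x τ c i ω g ^ 2)
        + e / 2 * (mean (fun (ω : ι → P) g => ‖interpErase x τ c i ω g‖ ^ 2) + c ^ 2 * finrank ℝ E)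
        + 2 * c * mean (fun (ω : ι → P) g => ‖interpErase x τ c i ω g‖ ^ 2)) := by
  have hconst : (c ^ 2 * finrank ℝ E : ℝ) = 𝔼 _ω : ι → P, (c ^ 2 * finrank ℝ E : ℝ) :=
    (expect_const univ_nonempty _).symm
  unfold mean
  rw [hconst]
  simp only [mul_expect, ← expect_add_distrib]
  exact expect_le_expect fun ω _ => S.integral_χ₁_le hq _ hc (by positivity) he

namespace IsDesign

theorem mean_shiftedSq_le (hx : IsDesign x) (h : Fintype.card ι * τ ^ 2 + c ^ 2 = 1) (i : ι) :
    mean (fun (ω : ι → P) g => shiftedSq x τ c i ω g) ≤ finrank ℝ E := by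
  have := hx.mean_shiftedSq_pow_le (τ := τ) (c := c) i (k := 1) (by norm_num)
  simp only [pow_one] at this
  exact this.trans (hx.mean_norm_sq_le h)

theorem mean_shiftedSq_sq_le (hx : IsDesign x) (h : Fintype.card ι * τ ^ 2 + c ^ 2 = 1) (i : ι)
    (hd : 3 ≤ finrank ℝ E) :
    mean (fun (ω : ι → P) g => shiftedSq x τ c i ω g ^ 2) ≤ 5 / 3 * (finrank ℝ E : ℝ) ^ 2 := by
  have hd' : (3 : ℝ) ≤ finrank ℝ E := by exact_mod_cast hd
  refine ((hx.mean_shiftedSq_pow_le i (by norm_num)).trans (hx.mean_norm_sq_sq_le h)).trans ?_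
  nlinarith

theorem mean_shiftedSq_cube_le (hx : IsDesign x) (h : Fintype.card ι * τ ^ 2 + c ^ 2 = 1) (i : ι)
    (hd : 3 ≤ finrank ℝ E) :
    mean (fun (ω : ι → P) g => shiftedSq x τ c i ω g ^ 3) ≤ 35 / 9 * (finrank ℝ E : ℝ) ^ 3 := by
  have hd' : (3 : ℝ) ≤ finrank ℝ E := by exact_mod_cast hd
  refine ((hx.mean_shiftedSq_pow_le i le_rfl).trans (hx.mean_norm_sq_cube_le h)).trans ?_
  nlinarith [mul_nonneg (sub_nonneg.2 hd') (sq_nonneg (finrank ℝ E : ℝ))]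

theorem mean_norm_interpErase_sq_le (hx : IsDesign x) (h : Fintype.card ι * τ ^ 2 + c ^ 2 = 1)
    (i : ι) : mean (fun (ω : ι → P) g => ‖interpErase x τ c i ω g‖ ^ 2) ≤ finrank ℝ E :=
  (mean_mono (fun ω => by fun_prop) (fun ω => by fun_prop) fun _ _ =>
    le_add_of_nonneg_right (by positivity)).trans (hx.mean_shiftedSq_le h i)

theorem mean_χ₁_le (hx : IsDesign x) (S : SmoothTest q) (hq : 0 ≤ q)
    (h : Fintype.card ι * τ ^ 2 + c ^ 2 = 1) (hc : 0 ≤ c) (i : ι) (hd : 3 ≤ finrank ℝ E) :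
    c * mean (fun (ω : ι → P) g => shiftedSq x τ c i ω g * ‖interpErase x τ c i ω g‖ ^ 2
      * S.χ₁ (shiftedSq x τ c i ω g)) ≤ 6 * q ^ 3 * √(finrank ℝ E) ^ 3 := by
  have hd' : (3 : ℝ) ≤ finrank ℝ E := by exact_mod_cast hd
  have he3 : 1.73 ≤ √(finrank ℝ E) := Real.le_sqrt_of_sq_le (by norm_num; linarith)
  have he : 0 < √(finrank ℝ E) := by linarith
  have hY := hx.mean_shiftedSq_sq_le h i hd
  have hV := hx.mean_norm_interpErase_sq_le h i
  have hV₀ : 0 ≤ mean fun (ω : ι → P) g => ‖interpErase x τ c i ω g‖ ^ 2 :=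
    expect_nonneg fun _ _ => integral_nonneg fun _ => sq_nonneg _
  have hX := S.mean_χ₁_le hq x τ hc i he
  have he2 : (finrank ℝ E : ℝ) = √(finrank ℝ E) ^ 2 := (Real.sq_sqrt (Nat.cast_nonneg _)).symm
  set e := √(finrank ℝ E)
  rw [he2] at hY hV hX
  have hc2 : c ^ 2 ≤ 1 := by
    have : 0 ≤ Fintype.card ι * τ ^ 2 := by positivity
    linarith
  have hc1 : c ≤ 1 := (sq_le_one_iff₀ hc).1 hc2
  suffices 2 * c * mean (fun (ω : ι → P) g => shiftedSq x τ c i ω g * ‖interpErase x τ c i ω g‖ ^ 2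
      * S.χ₁ (shiftedSq x τ c i ω g)) ≤ 12 * q ^ 3 * e ^ 3 by linarith
  calc _ ≤ 4 * q ^ 3 * (1 / (2 * e) * (5 / 3 * (e ^ 2) ^ 2) + e / 2 * (e ^ 2 + 1 * e ^ 2)
          + 2 * 1 * e ^ 2) := hX.trans (by gcongr)
    _ = 4 * q ^ 3 * (11 / 6 * e ^ 3 + 2 * e ^ 2) := by field_simp; ring
    _ ≤ 4 * q ^ 3 * (11 / 6 * e ^ 3 + 7 / 6 * e ^ 3) := by
      refine mul_le_mul_of_nonneg_left ?_ (by positivity)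
      nlinarith [mul_nonneg (sq_nonneg e) (sub_nonneg.2 he3)]
    _ = _ := by ring

end IsDesign

end Localization

section Interpolation

open ProbabilityTheory Module

section Derivative

variable {E : Type*} [NormedAddCommGroup E] [InnerProductSpace ℝ E]

theorem abs_inner_smul_add_smul_le (v g : E) {a b a' b' : ℝ} (ha : |a| ≤ 1) (hb : |b| ≤ 1)
    (ha' : |a'| ≤ 1) (hb' : |b'| ≤ 1) :
    |inner ℝ (a • v + b • g) (a' • v + b' • g)| ≤ (‖v‖ + ‖g‖) ^ 2 := by
  have h {a b : ℝ} (ha : |a| ≤ 1) (hb : |b| ≤ 1) : ‖a • v + b • g‖ ≤ ‖v‖ + ‖g‖ := by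
    refine (norm_add_le _ _).trans ?_
    rw [norm_smul, norm_smul]
    exact add_le_add (mul_le_of_le_one_left (norm_nonneg _) ha)
      (mul_le_of_le_one_left (norm_nonneg _) hb)
  rw [sq]
  exact (abs_real_inner_le_norm _ _).trans
    (mul_le_mul (h ha hb) (h ha' hb') (norm_nonneg _) (by positivity))

variable [FiniteDimensional ℝ E] [MeasurableSpace E] [BorelSpace E]
  {ι P : Type*} [Fintype ι] [DecidableEq ι] [Fintype P] {q : ℝ}

theorem SmoothTest.hasDerivAt_integral_rotation (S : SmoothTest q) (v : E) (θ : ℝ) :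
    HasDerivAt (fun θ => ∫ g, S.f (‖sin θ • v + cos θ • g‖ ^ 2) ∂stdGaussian E)
      (∫ g, S.f₁ (‖sin θ • v + cos θ • g‖ ^ 2)
        * (2 * inner ℝ (sin θ • v + cos θ • g) (cos θ • v + -sin θ • g)) ∂stdGaussian E) θ := by
  refine (hasDerivAt_integral_of_dominated_loc_of_deriv_le (s := Set.univ)
    (bound := fun g : E => q * (2 * (‖v‖ + ‖g‖) ^ 2))
    (F' := fun θ g => S.f₁ (‖sin θ • v + cos θ • g‖ ^ 2)
      * (2 * inner ℝ (sin θ • v + cos θ • g) (cos θ • v + -sin θ • g)))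
    Filter.univ_mem (.of_forall fun θ => ?_) (PolyGrowth.integrable (by fun_prop))
    (PolyGrowth.integrable (by fun_prop)).aestronglyMeasurable (ae_of_all _ fun g θ _ => ?_)
    (PolyGrowth.integrable (by fun_prop)) (ae_of_all _ fun g θ _ => ?_)).2
  · exact (PolyGrowth.integrable (by fun_prop)).aestronglyMeasurable
  · rw [Real.norm_eq_abs, abs_mul, abs_mul, abs_two]
    gcongr
    · exact (abs_nonneg _).trans (S.abs_f₁_le 0)
    · exact S.abs_f₁_le _
    · exact abs_inner_smul_add_smul_le v g (abs_sin_le_one θ) (abs_cos_le_one θ)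
        (abs_cos_le_one θ) ((abs_neg _).trans_le (abs_sin_le_one θ))
  · exact (S.hasDerivAt_f _).comp θ
      (((hasDerivAt_sin θ).smul_const v).add ((hasDerivAt_cos θ).smul_const g)).norm_sq

theorem SmoothTest.hasDerivAt_mean_interp (S : SmoothTest q) (x : P → E) (t θ : ℝ) :
    HasDerivAt (fun θ => mean fun (ω : ι → P) g => S.f (‖interp x (sin θ * t) (cos θ) ω g‖ ^ 2))
      (mean fun (ω : ι → P) g => S.f₁ (‖interp x (sin θ * t) (cos θ) ω g‖ ^ 2)
        * (2 * inner ℝ (interp x (sin θ * t) (cos θ) ω g)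
          (interp x (cos θ * t) (-sin θ) ω g))) θ := by
  simp only [mean, interp, mul_smul, Fintype.expect_eq_sum_div_card]
  exact (HasDerivAt.fun_sum fun ω _ => S.hasDerivAt_integral_rotation _ θ).div_const _

variable [Nonempty P] {x : P → E}

theorem IsDesign.mean_sub_eq_mean_stepTerm (hx : IsDesign x) (S : SmoothTest q) (τ c : ℝ)
    (i : ι) :
    mean (fun (ω : ι → P) g => S.f₁ (‖interp x τ c ω g‖ ^ 2) * inner ℝ (interp x τ c ω g) (x (ω i)))
      - τ * mean (fun (ω : ι → P) g => finrank ℝ E * S.f₁ (‖interp x τ c ω g‖ ^ 2)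
        + 2 * S.f₂ (‖interp x τ c ω g‖ ^ 2) * ‖interp x τ c ω g‖ ^ 2)
      = mean fun (ω : ι → P) g => 𝔼 p,
        S.stepTerm τ (shiftedSq x τ c i ω g) (inner ℝ (interpErase x τ c i ω g) (x p)) := by
  rw [← mean_const_mul, ← mean_sub (fun ω => by fun_prop) (fun ω => by fun_prop)]
  refine (mean_update (fun ω => by fun_prop) i).symm.trans ?_
  refine congr_arg mean (funext₂ fun ω g => expect_congr rfl fun p _ => ?_)
  simp only [Function.update_self, hx.norm_interp_update_sq, hx.inner_interp_update,
    SmoothTest.stepTerm]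
  ring

/-- Gaussian integration by parts, applied to the Gaussian half of the derivative, cancels the main
part of every summand of the other half. -/
theorem IsDesign.mean_deriv_eq_sum (hx : IsDesign x) (S : SmoothTest q) {t : ℝ}
    (ht : Fintype.card ι * t ^ 2 = 1) (σ c : ℝ) :
    mean (fun (ω : ι → P) g => S.f₁ (‖interp x (σ * t) c ω g‖ ^ 2)
        * (2 * inner ℝ (interp x (σ * t) c ω g) (interp x (c * t) (-σ) ω g)))
      = ∑ i, 2 * c * t * mean fun (ω : ι → P) g => 𝔼 p,
        S.stepTerm (σ * t) (shiftedSq x (σ * t) c i ω g)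
          (inner ℝ (interpErase x (σ * t) c i ω g) (x p)) := by
  set τ := σ * t with hτ
  set M := mean fun (ω : ι → P) g => finrank ℝ E * S.f₁ (‖interp x τ c ω g‖ ^ 2)
    + 2 * S.f₂ (‖interp x τ c ω g‖ ^ 2) * ‖interp x τ c ω g‖ ^ 2
  calc mean (fun (ω : ι → P) g => S.f₁ (‖interp x τ c ω g‖ ^ 2)
        * (2 * inner ℝ (interp x τ c ω g) (interp x (c * t) (-σ) ω g)))
      = mean fun (ω : ι → P) g => 2 * c * t * (∑ i, S.f₁ (‖interp x τ c ω g‖ ^ 2)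
          * inner ℝ (interp x τ c ω g) (x (ω i)))
          - 2 * σ * (S.f₁ (‖interp x τ c ω g‖ ^ 2) * inner ℝ (interp x τ c ω g) g) := by
        congr! 3 with ω g
        rw [← mul_sum, ← inner_sum, interp.eq_1 x (c * t), inner_add_right, real_inner_smul_right,
          real_inner_smul_right]
        ring
    _ = 2 * c * t * (∑ i, mean fun (ω : ι → P) g => S.f₁ (‖interp x τ c ω g‖ ^ 2)
          * inner ℝ (interp x τ c ω g) (x (ω i))) - 2 * σ * (c * M) := by
        rw [mean_sub (fun ω => by fun_prop) (fun ω => by fun_prop), mean_const_mul, mean_const_mul,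
          mean_sum _ fun i ω => by fun_prop,
          mean_radial_mul_inner_gaussian S.hasDerivAt_f₁ (by fun_prop) (by fun_prop)]
    _ = ∑ i, 2 * c * t * (mean (fun (ω : ι → P) g => S.f₁ (‖interp x τ c ω g‖ ^ 2)
          * inner ℝ (interp x τ c ω g) (x (ω i))) - τ * M) := by
        simp only [← mul_sum, sum_sub_distrib, sum_const, card_univ, nsmul_eq_mul]
        linear_combination (2 * c * σ * M) * ht + 2 * c * t * Fintype.card ι * M * hτ
    _ = _ := by simp only [M, hx.mean_sub_eq_mean_stepTerm S]

end Derivative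

section Comparison

/-- The part of the rate of the Gaussian comparison that does not need localization, for summands of
weight `t` in dimension `e ^ 2`. -/
noncomputable def stepBound (q t e : ℝ) : ℝ :=
  2 * e ^ 2 * q ^ 2 + 16 * e ^ 2 * q ^ 3 + q ^ 5 * t * (3528 * e ^ 5 + 2560 * t * e ^ 4)

theorem stepBound_mono {q t t' e : ℝ} (hq : 0 ≤ q) (ht : 0 ≤ t) (htt' : t ≤ t') (he : 0 ≤ e) :
    stepBound q t e ≤ stepBound q t' e := by
  unfold stepBound
  have := ht.trans htt'
  gcongr

theorem stepBound_nonneg {q t : ℝ} (hq : 0 ≤ q) (ht : 0 ≤ t) {e : ℝ} (he : 0 ≤ e) :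
    0 ≤ stepBound q t e := by
  unfold stepBound
  positivity

theorem sqrt_pow_five_le {b e : ℝ} (hb : 0 ≤ b) (he : 0 < e) :
    √b ^ 5 ≤ e / 2 * b ^ 2 + 1 / (2 * e) * b ^ 3 := by
  have h : 0 ≤ b ^ 2 * (e - √b) ^ 2 / (2 * e) := by positivity
  refine sub_nonneg.1 (h.trans_eq ?_)
  have hs := Real.sq_sqrt hb
  generalize √b = s at *
  subst hs
  field_simp
  ring

variable {E : Type*} [NormedAddCommGroup E] [InnerProductSpace ℝ E] [FiniteDimensional ℝ E]
  [MeasurableSpace E] [BorelSpace E] {ι P : Type*} [Fintype ι] [DecidableEq ι] [Fintype P]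
  [Nonempty P] {x : P → E} {q τ c : ℝ}

namespace IsDesign

theorem abs_mean_stepTerm_le (hx : IsDesign x) (S : SmoothTest q) (hq : 0 ≤ q) (hτ : 0 ≤ τ)
    (c : ℝ) (i : ι) {e : ℝ} (he : 0 < e) :
    |mean fun (ω : ι → P) g => 𝔼 p,
        S.stepTerm τ (shiftedSq x τ c i ω g) (inner ℝ (interpErase x τ c i ω g) (x p))|
      ≤ τ ^ 3 * (2 * finrank ℝ E * q ^ 2
        + 16 * q ^ 3 * mean (fun (ω : ι → P) g => shiftedSq x τ c i ω g)
        + 20 * mean (fun (ω : ι → P) g => shiftedSq x τ c i ω g * ‖interpErase x τ c i ω g‖ ^ 2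
          * S.χ₁ (shiftedSq x τ c i ω g))
        + q ^ 5 * τ * (635 * e + 1536 * τ) * mean (fun (ω : ι → P) g => shiftedSq x τ c i ω g ^ 2)
        + q ^ 5 * τ * (635 / e) * mean (fun (ω : ι → P) g => shiftedSq x τ c i ω g ^ 3)) := by
  rw [← mean_const (E := E) (ι := ι) (P := P) (2 * finrank ℝ E * q ^ 2)]
  simp only [← mean_const_mul]
  rw [← mean_add (fun _ => by fun_prop) (fun ω => by fun_prop),
    ← mean_add (fun ω => by fun_prop) (fun ω => by fun_prop),
    ← mean_add (fun ω => by fun_prop) (fun ω => by fun_prop),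
    ← mean_add (fun ω => by fun_prop) (fun ω => by fun_prop), ← mean_const_mul]
  refine abs_mean_le (fun ω => by fun_prop) (fun ω => by fun_prop) fun ω g => ?_
  refine (S.abs_expect_stepTerm_le (hx.nearGaussian _) hq hτ (Nat.cast_nonneg (finrank ℝ E))
    rfl).trans ?_
  refine mul_le_mul_of_nonneg_left ?_ (by positivity)
  have hs := mul_le_mul_of_nonneg_left (sqrt_pow_five_le (shiftedSq_nonneg x τ c i ω g) he)
    (by positivity : 0 ≤ 1270 * (q ^ 5 * τ))
  rw [← shiftedSq]
  linear_combination hs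

theorem mul_abs_mean_stepTerm_le (hx : IsDesign x) (S : SmoothTest q) (hq : 0 ≤ q) (hτ : 0 ≤ τ)
    (hc : 0 ≤ c) (h : Fintype.card ι * τ ^ 2 + c ^ 2 = 1) (hd : 3 ≤ finrank ℝ E) (i : ι) :
    c * |mean fun (ω : ι → P) g => 𝔼 p,
        S.stepTerm τ (shiftedSq x τ c i ω g) (inner ℝ (interpErase x τ c i ω g) (x p))|
      ≤ τ ^ 3 * (c * stepBound q τ √(finrank ℝ E) + 120 * q ^ 3 * √(finrank ℝ E) ^ 3) := by
  have he : 0 < √(finrank ℝ E : ℝ) := Real.sqrt_pos.2 (by exact_mod_cast (by omega))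
  have hχ := hx.mean_χ₁_le S hq h hc i hd
  have h1 := hx.mean_shiftedSq_le h i
  have h2 := hx.mean_shiftedSq_sq_le h i hd
  have h3 := hx.mean_shiftedSq_cube_le h i hd
  have key := hx.abs_mean_stepTerm_le S hq hτ c i he
  have he2 : (finrank ℝ E : ℝ) = √(finrank ℝ E) ^ 2 := (Real.sq_sqrt (Nat.cast_nonneg _)).symm
  set e := √(finrank ℝ E)
  set X := mean fun (ω : ι → P) g => shiftedSq x τ c i ω g * ‖interpErase x τ c i ω g‖ ^ 2
    * S.χ₁ (shiftedSq x τ c i ω g)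
  rw [he2] at h1 h2 h3 key
  calc _ ≤ c * (τ ^ 3 * (2 * e ^ 2 * q ^ 2 + 16 * q ^ 3 * e ^ 2 + 20 * X
          + q ^ 5 * τ * (635 * e + 1536 * τ) * (5 / 3 * (e ^ 2) ^ 2)
          + q ^ 5 * τ * (635 / e) * (35 / 9 * (e ^ 2) ^ 3))) := by
        refine mul_le_mul_of_nonneg_left (key.trans ?_) hc
        gcongr
    _ = τ ^ 3 * (c * (2 * e ^ 2 * q ^ 2 + 16 * e ^ 2 * q ^ 3
          + q ^ 5 * τ * (635 * (50 / 9) * e ^ 5 + 2560 * τ * e ^ 4)) + 20 * (c * X)) := by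
        field_simp
        ring
    _ ≤ τ ^ 3 * (c * stepBound q τ e + 20 * (6 * q ^ 3 * e ^ 3)) := by
        unfold stepBound
        gcongr
        norm_num
    _ = _ := by ring

theorem abs_mean_deriv_le (hx : IsDesign x) (S : SmoothTest q) (hq : 0 ≤ q) {t : ℝ} (ht : 0 ≤ t)
    (hn : Fintype.card ι * t ^ 2 = 1) (hd : 3 ≤ finrank ℝ E) {σ : ℝ} (hσ : 0 ≤ σ) (hc : 0 ≤ c)
    (hσc : σ ^ 2 + c ^ 2 = 1) :
    |mean fun (ω : ι → P) g => S.f₁ (‖interp x (σ * t) c ω g‖ ^ 2)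
        * (2 * inner ℝ (interp x (σ * t) c ω g) (interp x (c * t) (-σ) ω g))|
      ≤ 2 * t ^ 2 * σ * (c * stepBound q t √(finrank ℝ E) + 120 * q ^ 3 * √(finrank ℝ E) ^ 3) := by
  set R := stepBound q t √(finrank ℝ E)
  set C := 120 * q ^ 3 * √(finrank ℝ E) ^ 3
  have hσ1 : σ ≤ 1 := (sq_le_one_iff₀ hσ).1 (by linarith [sq_nonneg c])
  have hτt : σ * t ≤ t := mul_le_of_le_one_left ht hσ1
  have hτ : 0 ≤ σ * t := mul_nonneg hσ ht
  have hsum : Fintype.card ι * (σ * t) ^ 2 + c ^ 2 = 1 := by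
    linear_combination σ ^ 2 * hn + hσc
  have hR : stepBound q (σ * t) √(finrank ℝ E) ≤ R := stepBound_mono hq hτ hτt (by positivity)
  have hR₀ : 0 ≤ stepBound q (σ * t) √(finrank ℝ E) := stepBound_nonneg hq hτ (by positivity)
  rw [hx.mean_deriv_eq_sum S hn]
  calc _ ≤ ∑ i : ι, 2 * t * (c * |mean fun (ω : ι → P) g => 𝔼 p,
          S.stepTerm (σ * t) (shiftedSq x (σ * t) c i ω g)
            (inner ℝ (interpErase x (σ * t) c i ω g) (x p))|) := by
        refine (abs_sum_le_sum_abs _ _).trans_eq (sum_congr rfl fun i _ => ?_)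
        rw [abs_mul, abs_of_nonneg (by positivity : 0 ≤ 2 * c * t)]
        ring
    _ ≤ ∑ _i : ι, 2 * t * (t ^ 2 * (σ * t) * (c * R + C)) := by
        refine sum_le_sum fun i _ => mul_le_mul_of_nonneg_left ?_ (by positivity)
        refine (hx.mul_abs_mean_stepTerm_le S hq hτ hc hsum hd i).trans ?_
        rw [pow_succ]
        gcongr
    _ = _ := by
        rw [sum_const, card_univ, nsmul_eq_mul]
        linear_combination (2 * t ^ 2 * σ * (c * R + C)) * hn

theorem abs_expect_sub_integral_le (hx : IsDesign x) (S : SmoothTest q) (hq : 0 ≤ q) {t : ℝ}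
    (ht : 0 ≤ t) (hn : Fintype.card ι * t ^ 2 = 1) (hd : 3 ≤ finrank ℝ E) :
    |(𝔼 ω : ι → P, S.f (‖t • ∑ i, x (ω i)‖ ^ 2)) - ∫ g, S.f (‖g‖ ^ 2) ∂stdGaussian E|
      ≤ t ^ 2 * (stepBound q t √(finrank ℝ E) + 240 * q ^ 3 * √(finrank ℝ E) ^ 3) := by
  set R := stepBound q t √(finrank ℝ E)
  set C := 120 * q ^ 3 * √(finrank ℝ E) ^ 3 with hC
  let ψ (θ : ℝ) := mean fun (ω : ι → P) g => S.f (‖interp x (sin θ * t) (cos θ) ω g‖ ^ 2)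
  have hψ (θ : ℝ) := S.hasDerivAt_mean_interp (ι := ι) x t θ
  have hψ₀ : ψ 0 = ∫ g, S.f (‖g‖ ^ 2) ∂stdGaussian E := by
    simp [ψ, mean, interp, expect_const univ_nonempty]
  have hψ₁ : ψ (π / 2) = 𝔼 ω : ι → P, S.f (‖t • ∑ i, x (ω i)‖ ^ 2) := by simp [ψ, mean, interp]
  have hB (θ : ℝ) : HasDerivAt (fun θ => t ^ 2 * (R * sin θ ^ 2 + 2 * C * (1 - cos θ)))
      (2 * t ^ 2 * sin θ * (cos θ * R + C)) θ := by
    refine (((((hasDerivAt_sin θ).pow 2).const_mul R).add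
      (((hasDerivAt_cos θ).const_sub 1).const_mul (2 * C))).const_mul (t ^ 2)).congr_deriv ?_
    push_cast
    ring
  have := image_norm_le_of_norm_deriv_right_le_deriv_boundary (f := fun θ => ψ θ - ψ 0)
    (a := 0) (b := π / 2) (fun θ _ => ((hψ θ).sub_const _).continuousAt.continuousWithinAt)
    (fun θ _ => ((hψ θ).sub_const _).hasDerivWithinAt) (by simp) hB
    (fun θ hθ => hx.abs_mean_deriv_le S hq ht hn hd
      (sin_nonneg_of_nonneg_of_le_pi hθ.1 (by linarith [hθ.2, pi_pos]))
      (cos_nonneg_of_mem_Icc ⟨by linarith [hθ.1, pi_pos], hθ.2.le⟩) (sin_sq_add_cos_sq θ))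
    (Set.right_mem_Icc.2 (by positivity))
  rw [← hψ₀, ← hψ₁]
  refine this.trans_eq ?_
  rw [sin_pi_div_two, cos_pi_div_two, hC]
  ring

end IsDesign

end Comparison

end Interpolation

section ChiSquare

open Module ProbabilityTheory

variable {E : Type*} [NormedAddCommGroup E] [InnerProductSpace ℝ E] [FiniteDimensional ℝ E]
  [MeasurableSpace E] [BorelSpace E] [Nontrivial E]

theorem integral_fun_norm_sq (f : ℝ → ℝ) :
    ∫ x : E, f (‖x‖ ^ 2) = finrank ℝ E * volume.real (Metric.ball (0 : E) 1) / 2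
      * ∫ y in Set.Ioi 0, y ^ ((finrank ℝ E : ℝ) / 2 - 1) * f y := by
  rw [← integral_comp_rpow_Ioi_of_pos two_pos,
    integral_fun_norm_addHaar volume fun ρ => f (ρ ^ 2), nsmul_eq_mul, smul_eq_mul, ← mul_assoc,
    div_mul_eq_mul_div, mul_div_assoc, ← integral_div]
  congr 1
  refine setIntegral_congr_fun measurableSet_Ioi fun y (hy : 0 < y) => ?_
  have hpow : (y ^ (2 : ℝ)) ^ ((finrank ℝ E : ℝ) / 2 - 1) * y = y ^ (finrank ℝ E - 1) := by
    rw [← rpow_mul hy.le, ← rpow_add_one hy.ne', ← rpow_natCast,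
      Nat.cast_sub (Nat.succ_le_of_lt finrank_pos)]
    congr 1
    push_cast
    ring
  simp only [smul_eq_mul]
  rw [← hpow, rpow_two, show (2 : ℝ) - 1 = 1 by norm_num, rpow_one]
  ring

theorem integral_gammaMeasure {a r : ℝ} (ha : 0 < a) (hr : 0 < r) (f : ℝ → ℝ) :
    ∫ y, f y ∂gammaMeasure a r
      = r ^ a / Gamma a * ∫ y in Set.Ioi 0, y ^ (a - 1) * (rexp (-(r * y)) * f y) := by
  unfold gammaMeasure gammaPDF
  rw [integral_withDensity_eq_integral_toReal_smul (measurable_gammaPDFReal a r).ennreal_ofReal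
    (ae_of_all _ fun _ => ENNReal.ofReal_lt_top), ← integral_const_mul,
    ← integral_Ici_eq_integral_Ioi, ← integral_indicator measurableSet_Ici]
  refine integral_congr_ae (ae_of_all _ fun y => ?_)
  simp only [ENNReal.toReal_ofReal (gammaPDFReal_nonneg ha hr y)]
  simp only [gammaPDFReal, Set.indicator, Set.mem_Ici, smul_eq_mul]
  split_ifs <;> ring

instance isProbabilityMeasure_chiSq {d : ℕ} [NeZero d] : IsProbabilityMeasure (chiSq d) :=
  isProbabilityMeasure_gammaMeasure (div_pos (Nat.cast_pos.2 (NeZero.pos d)) two_pos) (by norm_num)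

theorem integral_norm_sq_stdGaussian_eq_integral_chiSq (f : ℝ → ℝ) :
    ∫ x, f (‖x‖ ^ 2) ∂stdGaussian E = ∫ y, f y ∂chiSq (finrank ℝ E) := by
  have hd : (0 : ℝ) < finrank ℝ E / 2 := div_pos (Nat.cast_pos.2 finrank_pos) two_pos
  have : NeZero (finrank ℝ E) := ⟨finrank_pos.ne'⟩
  obtain ⟨K, hK⟩ : ∃ K : ℝ, ∀ f : ℝ → ℝ, ∫ x, f (‖x‖ ^ 2) ∂stdGaussian E
      = K * ∫ y in Set.Ioi 0, y ^ ((finrank ℝ E : ℝ) / 2 - 1) * (rexp (-(1 / 2 * y)) * f y) := by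
    refine ⟨(2 * π) ^ (-(finrank ℝ E / 2 : ℝ)) *
      (finrank ℝ E * volume.real (Metric.ball (0 : E) 1) / 2), fun f => ?_⟩
    rw [integral_stdGaussian, mul_assoc, ← integral_fun_norm_sq, ← integral_const_mul]
    simp only [stdGaussianPDFReal, neg_mul, mul_assoc]
  -- Both laws have density proportional to `y ^ (d / 2 - 1) * exp (-y / 2)`: testing them on the
  -- constant function identifies the two normalizing constants.
  have h1 := hK fun _ => 1
  have h2 := integral_gammaMeasure hd one_half_pos fun _ => 1
  rw [← chiSq, integral_const, probReal_univ, one_smul] at h2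
  rw [integral_const, probReal_univ, one_smul] at h1
  rw [hK, chiSq, integral_gammaMeasure hd one_half_pos]
  congr 1
  exact mul_right_cancel₀ (right_ne_zero_of_mul (h1 ▸ one_ne_zero)) (h1.symm.trans h2)

end ChiSquare

section GammaLowerBound

theorem log_le_half_sub_inv {u : ℝ} (hu : 1 ≤ u) : log u ≤ (u - u⁻¹) / 2 := by
  rw [← Real.sinh_log (by linarith)]
  exact Real.self_le_sinh_iff.2 (log_nonneg hu)

/-- The function `√(a + 1) * (a / e) ^ a`, comparable to `Gamma (a + 1)` by Stirling's formula. -/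
noncomputable def stirling (a : ℝ) : ℝ := √(a + 1) * (a ^ a * rexp (-a))

theorem stirling_eq_exp {a : ℝ} (ha : 0 < a) :
    stirling a = rexp (log (a + 1) / 2 + (a * log a - a)) := by
  rw [stirling, rpow_def_of_pos ha, sub_eq_add_neg, exp_add, exp_add, ← log_sqrt (by positivity),
    exp_log (by positivity), mul_comm a]

theorem stirling_add_one_le {a : ℝ} (ha : 0 < a) : stirling (a + 1) ≤ (a + 1) * stirling a := by
  have h1 : a * (log (a + 1) - log a) ≤ (2 * a + 1) / (2 * a + 2) := by
    rw [← log_div (by positivity) ha.ne']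
    have hu : 1 ≤ (a + 1) / a := (one_le_div ha).2 (by linarith)
    refine (mul_le_mul_of_nonneg_left (log_le_half_sub_inv hu) ha.le).trans_eq ?_
    field_simp
    ring
  have h2 : log (a + 1 + 1) - log (a + 1) ≤ 1 / (a + 1) := by
    rw [← log_div (by positivity) (by positivity)]
    refine (log_le_sub_one_of_pos (by positivity)).trans_eq ?_
    field_simp
    ring
  have h3 : (2 * a + 1) / (2 * a + 2) + 1 / (a + 1) / 2 = 1 := by
    field_simp
    ring
  calc stirling (a + 1)
      = rexp (log (a + 1 + 1) / 2 + ((a + 1) * log (a + 1) - (a + 1))) :=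
        stirling_eq_exp (by positivity)
    _ ≤ rexp (log (a + 1) + (log (a + 1) / 2 + (a * log a - a))) := by
        refine exp_le_exp.2 ?_
        linear_combination h1 + h2 / 2 + h3
    _ = (a + 1) * stirling a := by rw [exp_add, exp_log (by positivity), stirling_eq_exp ha]

theorem stirling_one_half_le : 3 / 2 * stirling (1 / 2) ≤ Gamma (1 / 2 + 1) := by
  have hexp : rexp (-(1 / 2)) ^ 2 = (rexp 1)⁻¹ := by
    rw [← exp_nat_mul, ← exp_neg]
    norm_num
  have hsq : (3 / 2 * stirling (1 / 2)) ^ 2 ≤ (4 / 5) ^ 2 := by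
    rw [stirling, ← sqrt_eq_rpow, mul_pow, mul_pow, mul_pow, hexp, sq_sqrt (by norm_num),
      sq_sqrt (by norm_num), ← div_eq_mul_inv, mul_div, mul_div, div_le_iff₀ (by positivity)]
    linarith [Real.exp_one_gt_d9]
  have hpi : 8 / 5 ≤ √π := le_sqrt_of_sq_le (by linarith [pi_gt_three])
  rw [Real.Gamma_add_one (by norm_num), Real.Gamma_one_half_eq]
  linarith [(abs_le_of_sq_le_sq' hsq (by norm_num)).2]

theorem stirling_one_le : 3 / 2 * stirling 1 ≤ Gamma (1 + 1) := by
  have h2 : √(1 + 1) ≤ 3 / 2 := sqrt_le_iff.2 (by norm_num)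
  rw [stirling, Real.Gamma_add_one one_ne_zero, Real.Gamma_one, one_rpow, exp_neg, one_mul,
    ← div_eq_mul_inv, mul_div, div_le_iff₀ (by positivity)]
  linarith [Real.exp_one_gt_d9]

/-- The step `a ↦ a + 1` of the induction reduces the half-integers to `1 / 2` and `1`. -/
theorem stirling_half_le_Gamma (k : ℕ) :
    3 / 2 * stirling ((k + 1) / 2) ≤ Gamma ((k + 1 : ℝ) / 2 + 1) := by
  induction k using Nat.twoStepInduction with
  | zero => simpa using stirling_one_half_le
  | one => simpa [one_add_one_eq_two] using stirling_one_le
  | more k ih _ =>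
    have ha : (0 : ℝ) < (k + 1) / 2 := by positivity
    rw [show ((k + 2 : ℕ) + 1 : ℝ) / 2 = (k + 1) / 2 + 1 by push_cast; ring,
      Real.Gamma_add_one (by positivity)]
    linear_combination 3 / 2 * stirling_add_one_le ha + ((k + 1 : ℝ) / 2 + 1) * ih

end GammaLowerBound

section ChiSquareDensity

open ProbabilityTheory

theorem rpow_mul_exp_neg_le {a r x : ℝ} (ha : 0 < a) (hr : 0 < r) (hx : 0 ≤ x) :
    x ^ a * rexp (-(r * x)) ≤ (a / r) ^ a * rexp (-a) := by
  rcases hx.eq_or_lt with rfl | hx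
  · rw [zero_rpow ha.ne', zero_mul]
    positivity
  have hlog := log_le_sub_one_of_pos (div_pos hx (div_pos ha hr))
  rw [log_div hx.ne' (by positivity)] at hlog
  have hmul : x / (a / r) * a = r * x := by field_simp
  rw [rpow_def_of_pos hx, rpow_def_of_pos (by positivity), ← exp_add, ← exp_add]
  refine exp_le_exp.2 ?_
  linear_combination a * hlog + hmul

theorem gammaPDFReal_half_le {d : ℕ} (hd : 3 ≤ d) (x : ℝ) :
    gammaPDFReal (d / 2) (1 / 2) x ≤ √2 / 3 / √d := by
  obtain ⟨k, rfl⟩ := Nat.exists_eq_add_of_le' hd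
  unfold gammaPDFReal
  split_ifs with hx
  swap
  · positivity
  set a : ℝ := (k + 1) / 2 with ha_def
  have ha : 0 < a := by positivity
  have hd : ((k + 3 : ℕ) : ℝ) / 2 = a + 1 := by push_cast [ha_def]; ring
  have hsqrt : √(k + 3 : ℕ) = √2 * √(a + 1) := by
    rw [← sqrt_mul (by positivity), ← hd, mul_div_cancel₀ _ two_ne_zero]
  have hGamma : 0 < Gamma (a + 1) := Gamma_pos_of_pos (by positivity)
  have hhalf : (1 / 2 : ℝ) ^ (a + 1) * (a / (1 / 2)) ^ a = a ^ a / 2 := by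
    rw [rpow_add_one (by norm_num), mul_right_comm, ← mul_rpow (by norm_num) (by positivity),
      mul_div_cancel₀ _ (by norm_num)]
    ring
  have hstirling : 3 / 2 * (√(a + 1) * (a ^ a * rexp (-a))) ≤ Gamma (a + 1) :=
    stirling_half_le_Gamma k
  rw [hd, hsqrt, add_sub_cancel_right, mul_assoc, div_mul_eq_mul_div, div_le_iff₀ hGamma]
  calc (1 / 2 : ℝ) ^ (a + 1) * (x ^ a * rexp (-(1 / 2 * x)))
      ≤ (1 / 2) ^ (a + 1) * ((a / (1 / 2)) ^ a * rexp (-a)) := by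
        exact mul_le_mul_of_nonneg_left (rpow_mul_exp_neg_le ha one_half_pos hx) (by positivity)
    _ = a ^ a * rexp (-a) / 2 := by rw [← mul_assoc, hhalf, div_mul_eq_mul_div]
    _ ≤ 1 / (3 * √(a + 1)) * Gamma (a + 1) := by
        rw [div_mul_eq_mul_div, one_mul, le_div_iff₀ (by positivity)]
        linarith
    _ = √2 / 3 / (√2 * √(a + 1)) * Gamma (a + 1) := by field_simp

theorem chiSq_real_Ioc_le {d : ℕ} (hd : 3 ≤ d) {a b : ℝ} (hab : a ≤ b) :
    (chiSq d).real (Set.Ioc a b) ≤ √2 / 3 / √d * (b - a) := by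
  refine ENNReal.toReal_le_of_le_ofReal (mul_nonneg (by positivity) (sub_nonneg.2 hab)) ?_
  rw [chiSq, gammaMeasure, withDensity_apply _ measurableSet_Ioc]
  calc _ ≤ ∫⁻ _ in Set.Ioc a b, ENNReal.ofReal (√2 / 3 / √d) :=
        lintegral_mono fun x => ENNReal.ofReal_le_ofReal (gammaPDFReal_half_le hd x)
    _ = _ := by rw [setLIntegral_const, Real.volume_Ioc, ← ENNReal.ofReal_mul (by positivity)]

end ChiSquareDensity

section Smoothing

variable {q : ℝ} {μ ν : Measure ℝ} [IsProbabilityMeasure μ] [IsProbabilityMeasure ν]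

theorem integrable_stepFunction (a : ℝ) (hq : 0 ≤ q) : Integrable (stepFunction a hq).f ν := by
  refine .of_bound (stepFunction a hq).polyGrowth_f.continuous.aestronglyMeasurable 1
    (ae_of_all _ fun x => ?_)
  obtain ⟨h0, h1⟩ := stepFunction_mem_Icc a hq x
  rwa [Real.norm_eq_abs, abs_of_nonneg h0]

theorem measureReal_Iic_le_one_sub_integral (a : ℝ) (hq : 0 ≤ q) :
    ν.real (Set.Iic a) ≤ 1 - ∫ x, (stepFunction a hq).f x ∂ν := by
  have hf : Integrable (stepFunction a hq).f ν := integrable_stepFunction a hq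
  calc ν.real (Set.Iic a) = ∫ x, (Set.Iic a).indicator 1 x ∂ν :=
        (integral_indicator_one measurableSet_Iic).symm
    _ ≤ ∫ x, (1 - (stepFunction a hq).f x) ∂ν := by
        refine integral_mono ((integrable_const (1 : ℝ)).indicator measurableSet_Iic)
          ((integrable_const 1).sub hf) (Set.indicator_le' (fun x hx => ?_) fun x _ => ?_)
        · simp [stepFunction_eq_zero hq hx]
        · exact sub_nonneg.2 (stepFunction_mem_Icc a hq x).2
    _ = 1 - ∫ x, (stepFunction a hq).f x ∂ν := by
        rw [integral_sub (integrable_const 1) hf, integral_const, probReal_univ, one_smul]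

theorem one_sub_integral_le_measureReal_Iic (a : ℝ) (hq : 0 < q) :
    1 - ∫ x, (stepFunction a hq.le).f x ∂ν ≤ ν.real (Set.Iic (a + 5 / q)) := by
  have hf : Integrable (stepFunction a hq.le).f ν := integrable_stepFunction a hq.le
  calc 1 - ∫ x, (stepFunction a hq.le).f x ∂ν = ∫ x, (1 - (stepFunction a hq.le).f x) ∂ν := by
        rw [integral_sub (integrable_const 1) hf, integral_const, probReal_univ, one_smul]
    _ ≤ ∫ x, (Set.Iic (a + 5 / q)).indicator 1 x ∂ν := by
        refine integral_mono ((integrable_const 1).sub hf)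
          ((integrable_const (1 : ℝ)).indicator measurableSet_Iic)
          (Set.le_indicator (fun x _ => ?_) fun x hx => ?_)
        · exact sub_le_self 1 (stepFunction_mem_Icc a hq.le x).1
        · have : 5 ≤ (x - a) * q := (div_le_iff₀ hq).1 (le_sub_iff_add_le'.2 (not_le.1 hx).le)
          exact (sub_eq_zero.2 (stepFunction_eq_one hq.le this).symm).le
    _ = ν.real (Set.Iic (a + 5 / q)) := integral_indicator_one measurableSet_Iic

theorem abs_measureReal_Iic_sub_le (hq : 0 < q) {K M : ℝ}
    (hK : ∀ S : SmoothTest q, |(∫ x, S.f x ∂μ) - ∫ x, S.f x ∂ν| ≤ K)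
    (hM : ∀ a b, a ≤ b → ν.real (Set.Ioc a b) ≤ M * (b - a)) (z : ℝ) :
    |μ.real (Set.Iic z) - ν.real (Set.Iic z)| ≤ K + M * (5 / q) := by
  have hwindow : ∀ a, ν.real (Set.Iic (a + 5 / q)) - ν.real (Set.Iic a) ≤ M * (5 / q) := fun a => by
    have hab : a ≤ a + 5 / q := le_add_of_nonneg_right (by positivity)
    rw [← measureReal_sdiff (Set.Iic_subset_Iic.2 hab) measurableSet_Iic, Set.Iic_sdiff_Iic]
    simpa only [add_sub_cancel_left] using hM _ _ hab
  rw [abs_le]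
  constructor
  · have hμ := one_sub_integral_le_measureReal_Iic (ν := μ) (z - 5 / q) hq
    have hν := measureReal_Iic_le_one_sub_integral (ν := ν) (z - 5 / q) hq.le
    have hμν := (abs_le.1 (hK (stepFunction (z - 5 / q) hq.le))).2
    have hz := hwindow (z - 5 / q)
    rw [sub_add_cancel] at hμ hz
    linarith
  · have hμ := measureReal_Iic_le_one_sub_integral (ν := μ) z hq.le
    have hν := one_sub_integral_le_measureReal_Iic (ν := ν) z hq
    have hμν := (abs_le.1 (hK (stepFunction z hq.le))).1
    linarith [hwindow z]

end Smoothing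

section Kolmogorov

open Module

theorem comparison_add_window_le {e y : ℝ} (he : 1 ≤ e) (hy : 0 < y) (hy1 : y ≤ 1) :
    (y ^ 2) ^ 2 * (stepBound (5 * e * y)⁻¹ (y ^ 2) e + 240 * (5 * e * y)⁻¹ ^ 3 * e ^ 3)
      + √2 / 3 / e * (5 / (5 * e * y)⁻¹) ≤ 16 * y := by
  have hsqrt : √2 ≤ 1.4143 := by rw [Real.sqrt_le_left (by norm_num)]; norm_num
  have : 0 < e := by linarith
  have hei : e⁻¹ ≤ 1 := inv_le_one_of_one_le₀ he
  have hexpand : (y ^ 2) ^ 2 * (stepBound (5 * e * y)⁻¹ (y ^ 2) e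
        + 240 * (5 * e * y)⁻¹ ^ 3 * e ^ 3) + √2 / 3 / e * (5 / (5 * e * y)⁻¹)
      = (25 / 3 * √2 + 2 / 25 * y + 16 / 125 * e⁻¹ + 3528 / 3125
        + 2560 / 3125 * (y ^ 2 * e⁻¹) + 240 / 125) * y := by
    rw [stepBound]
    field_simp
    ring
  have hye : y ^ 2 * e⁻¹ ≤ 1 := mul_le_one₀ (pow_le_one₀ hy.le hy1) (by positivity) hei
  rw [hexpand]
  gcongr
  linarith

variable {ι E P : Type*} [Fintype ι] [Fintype P] [Nonempty P]

theorem integral_uniformOfFintype {α : Type*} [Fintype α] [Nonempty α] [MeasurableSpace α]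
    [MeasurableSingletonClass α] (f : α → ℝ) :
    ∫ ω, f ω ∂(PMF.uniformOfFintype α).toMeasure = 𝔼 ω, f ω := by
  rw [PMF.integral_eq_sum, Fintype.expect_eq_sum_div_card, sum_div]
  refine sum_congr rfl fun ω _ => ?_
  rw [PMF.uniformOfFintype_apply, ENNReal.toReal_inv, ENNReal.toReal_natCast, smul_eq_mul,
    inv_mul_eq_div]

variable [DecidableEq ι] [Nonempty ι] [MeasurableSpace P] [MeasurableSingletonClass P]
  [NormedAddCommGroup E] [InnerProductSpace ℝ E] [FiniteDimensional ℝ E] {x : P → E}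

theorem IsDesign.abs_measureReal_sub_chiSq_le (hx : IsDesign x) (hd : 3 ≤ finrank ℝ E) {y : ℝ}
    (hy : 0 < y) (hιy : Fintype.card ι * y ^ 4 = 1) (z : ℝ) :
    |(PMF.uniformOfFintype (ι → P)).toMeasure.real {ω | ‖y ^ 2 • ∑ i, x (ω i)‖ ^ 2 ≤ z}
      - (chiSq (finrank ℝ E)).real (Set.Iic z)| ≤ 16 * y := by
  borelize E
  have : Nontrivial E := nontrivial_of_finrank_pos (R := ℝ) (by omega)
  have : NeZero (finrank ℝ E) := ⟨by omega⟩
  have hy1 : y ≤ 1 := by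
    have hι : (1 : ℝ) ≤ Fintype.card ι := Nat.one_le_cast.2 Fintype.card_pos
    refine (pow_le_one_iff_of_nonneg hy.le four_ne_zero).1 ?_
    rw [← hιy]
    exact le_mul_of_one_le_left (by positivity) hι
  set e : ℝ := √(finrank ℝ E)
  have he : 1 ≤ e := Real.one_le_sqrt.2 (by exact_mod_cast (by omega : 1 ≤ finrank ℝ E))
  have hq : 0 < (5 * e * y)⁻¹ := by positivity
  set T : (ι → P) → ℝ := fun ω => ‖y ^ 2 • ∑ i, x (ω i)‖ ^ 2
  have hT : Measurable T := .of_discrete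
  set μ := (PMF.uniformOfFintype (ι → P)).toMeasure.map T
  have : IsProbabilityMeasure μ := Measure.isProbabilityMeasure_map hT.aemeasurable
  have hsmooth : ∀ S : SmoothTest (5 * e * y)⁻¹,
      |(∫ u, S.f u ∂μ) - ∫ u, S.f u ∂chiSq (finrank ℝ E)| ≤ (y ^ 2) ^ 2
        * (stepBound (5 * e * y)⁻¹ (y ^ 2) e + 240 * (5 * e * y)⁻¹ ^ 3 * e ^ 3) := fun S => by
    rw [integral_map hT.aemeasurable S.polyGrowth_f.continuous.aestronglyMeasurable,
      integral_uniformOfFintype, ← integral_norm_sq_stdGaussian_eq_integral_chiSq]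
    exact hx.abs_expect_sub_integral_le S hq.le (by positivity) (by rw [← hιy]; ring) hd
  calc |_ - _| = |μ.real (Set.Iic z) - (chiSq (finrank ℝ E)).real (Set.Iic z)| := by
        rw [map_measureReal_apply hT measurableSet_Iic]; rfl
    _ ≤ _ := abs_measureReal_Iic_sub_le hq hsmooth (fun _ _ => chiSq_real_Ioc_le hd) z
    _ ≤ 16 * y := comparison_add_window_le he hy hy1

end Kolmogorov

section PermutationMoments

open Equiv

variable {ι : Type*} {a ρ : ι → ℝ}

/-- The increment `permStat a ρ (σ * swap i j) - permStat a ρ σ` of the linear permutation statistic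
when two arguments of the permutation are swapped. -/
def permDiff (a ρ : ι → ℝ) (i j : ι) (σ : Perm ι) : ℝ := -((a i - a j) * (ρ (σ i) - ρ (σ j)))

theorem permDiff_mul_swap [DecidableEq ι] (i j : ι) (σ : Perm ι) :
    permDiff a ρ i j (σ * swap i j) = -permDiff a ρ i j σ := by
  unfold permDiff
  rw [Perm.mul_apply, Perm.mul_apply, swap_apply_left, swap_apply_right]
  ring

theorem permDiff_sq_le {R : ℝ} (hR : ∀ i j, (ρ i - ρ j) ^ 2 ≤ R) (i j : ι) (σ : Perm ι) :
    permDiff a ρ i j σ ^ 2 ≤ R * (a i - a j) ^ 2 := by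
  rw [permDiff, neg_sq, mul_pow, mul_comm]
  gcongr
  exact hR _ _

variable [Fintype ι]

/-- The linear permutation statistic with coefficients `a` and scores `ρ`. -/
def permStat (a ρ : ι → ℝ) (σ : Perm ι) : ℝ := ∑ j, a j * ρ (σ j)

theorem sum_permDiff (ha : ∑ i, a i = 0) (σ : Perm ι) :
    ∑ i, ∑ j, permDiff a ρ i j σ = -(2 * Fintype.card ι * permStat a ρ σ) := by
  have hexpand : ∀ i j, permDiff a ρ i j σ
      = -(a i * ρ (σ i)) + a i * ρ (σ j) + a j * ρ (σ i) - a j * ρ (σ j) := fun i j => by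
    unfold permDiff; ring
  simp only [hexpand, sum_sub_distrib, sum_add_distrib, sum_const, card_univ, nsmul_eq_mul,
    ← mul_sum, ← sum_mul, ha, sum_neg_distrib]
  unfold permStat
  ring

theorem sum_permDiff_sq (ha : ∑ i, a i = 0) (hρ : ∑ i, ρ i = 0) (σ : Perm ι) :
    ∑ i, ∑ j, permDiff a ρ i j σ ^ 2 = 2 * Fintype.card ι * ∑ i, a i ^ 2 * ρ (σ i) ^ 2
      + 2 * (∑ i, a i ^ 2) * (∑ i, ρ i ^ 2) + 4 * permStat a ρ σ ^ 2 := by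
  have hρσ : ∑ i, ρ (σ i) = 0 := (Equiv.sum_comp σ ρ).trans hρ
  have hρσ2 : ∑ i, ρ (σ i) ^ 2 = ∑ i, ρ i ^ 2 := Equiv.sum_comp σ fun i => ρ i ^ 2
  have hexpand : ∀ i j, permDiff a ρ i j σ ^ 2
      = a i ^ 2 * ρ (σ i) ^ 2 + a j ^ 2 * ρ (σ j) ^ 2 + a i ^ 2 * ρ (σ j) ^ 2
        + ρ (σ i) ^ 2 * a j ^ 2 - 2 * a i * ρ (σ i) ^ 2 * a j - 2 * a i * (a j * ρ (σ j) ^ 2)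
        - 2 * a i ^ 2 * ρ (σ i) * ρ (σ j) - 2 * ρ (σ i) * (a j ^ 2 * ρ (σ j))
        + 4 * (a i * ρ (σ i)) * (a j * ρ (σ j)) := fun i j => by
    unfold permDiff; ring
  simp only [hexpand, sum_sub_distrib, sum_add_distrib, sum_const, card_univ, nsmul_eq_mul,
    ← mul_sum, ← sum_mul, ha, hρσ, hρσ2]
  unfold permStat
  ring

theorem sum_sub_sq (ha : ∑ i, a i = 0) :
    ∑ i, ∑ j, (a i - a j) ^ 2 = 2 * Fintype.card ι * ∑ i, a i ^ 2 := by
  have hexpand : ∀ i j, (a i - a j) ^ 2 = a i ^ 2 + a j ^ 2 - 2 * a i * a j := fun i j => by ring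
  simp only [hexpand, sum_sub_distrib, sum_add_distrib, sum_const, card_univ, nsmul_eq_mul,
    ← mul_sum, ha, mul_zero]
  ring

variable [DecidableEq ι]

theorem permStat_mul_swap (i j : ι) (σ : Perm ι) :
    permStat a ρ (σ * swap i j) = permStat a ρ σ + permDiff a ρ i j σ := by
  rcases eq_or_ne i j with rfl | hij
  · simp [permDiff, Perm.one_def.symm]
  have hrest : ∑ k ∈ (univ.erase i).erase j, a k * ρ ((σ * swap i j) k)
      = ∑ k ∈ (univ.erase i).erase j, a k * ρ (σ k) := sum_congr rfl fun k hk => by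
    rw [Perm.mul_apply, swap_apply_of_ne_of_ne (ne_of_mem_erase (mem_of_mem_erase hk))
      (ne_of_mem_erase hk)]
  have hj : j ∈ univ.erase i := mem_erase.2 ⟨hij.symm, mem_univ j⟩
  unfold permStat permDiff
  rw [← add_sum_erase _ _ (mem_univ i), ← add_sum_erase _ _ (mem_univ i),
    ← add_sum_erase _ _ hj, ← add_sum_erase _ _ hj, hrest, Perm.mul_apply, Perm.mul_apply,
    swap_apply_left, swap_apply_right]
  ring

theorem expect_perm_mul_right (u : Perm ι → ℝ) (τ : Perm ι) : 𝔼 σ, u (σ * τ) = 𝔼 σ, u σ :=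
  Fintype.expect_equiv (Equiv.mulRight τ) _ _ fun _ => rfl

theorem expect_perm_apply (u : ι → ℝ) (i : ι) :
    Fintype.card ι * 𝔼 σ : Perm ι, u (σ i) = ∑ k, u k := by
  have hij : ∀ j, 𝔼 σ : Perm ι, u (σ j) = 𝔼 σ : Perm ι, u (σ i) := fun j => by
    rw [← expect_perm_mul_right (fun σ => u (σ j)) (swap i j)]
    simp
  calc Fintype.card ι * 𝔼 σ : Perm ι, u (σ i) = ∑ j, 𝔼 σ : Perm ι, u (σ j) := by simp [hij]
    _ = 𝔼 σ : Perm ι, ∑ j, u (σ j) := (expect_sum_comm _ _ _).symm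
    _ = 𝔼 σ : Perm ι, ∑ j, u j := expect_congr rfl fun σ _ => Equiv.sum_comp σ u
    _ = ∑ k, u k := expect_const univ_nonempty _

-- `σ` and `σ * swap i j` form an exchangeable pair.
theorem expect_permDiff_mul (φ : ℝ → ℝ) (i j : ι) :
    𝔼 σ, permDiff a ρ i j σ * φ (permStat a ρ σ)
      = -(1 / 2 * 𝔼 σ, permDiff a ρ i j σ
        * (φ (permStat a ρ σ + permDiff a ρ i j σ) - φ (permStat a ρ σ))) := by
  have h := expect_perm_mul_right (fun σ => permDiff a ρ i j σ * φ (permStat a ρ σ)) (swap i j)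
  simp only [permStat_mul_swap, permDiff_mul_swap, neg_mul, expect_neg_distrib] at h
  simp only [mul_sub, expect_sub_distrib]
  linarith

theorem expect_permStat_mul (ha : ∑ i, a i = 0) (φ : ℝ → ℝ) :
    4 * Fintype.card ι * 𝔼 σ, permStat a ρ σ * φ (permStat a ρ σ)
      = ∑ i, ∑ j, 𝔼 σ, permDiff a ρ i j σ
        * (φ (permStat a ρ σ + permDiff a ρ i j σ) - φ (permStat a ρ σ)) := by
  have hstat : 𝔼 σ, (∑ i, ∑ j, permDiff a ρ i j σ) * φ (permStat a ρ σ)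
      = -(2 * Fintype.card ι * 𝔼 σ, permStat a ρ σ * φ (permStat a ρ σ)) := by
    simp only [sum_permDiff ha, neg_mul, expect_neg_distrib, mul_expect, mul_assoc]
  have hpair : 𝔼 σ, (∑ i, ∑ j, permDiff a ρ i j σ) * φ (permStat a ρ σ)
      = -(1 / 2 * ∑ i, ∑ j, 𝔼 σ, permDiff a ρ i j σ
        * (φ (permStat a ρ σ + permDiff a ρ i j σ) - φ (permStat a ρ σ))) := by
    simp only [sum_mul, expect_sum_comm, expect_permDiff_mul, mul_sum, sum_neg_distrib]
  linarith

theorem expect_permStat_sq (ha : ∑ i, a i = 0) (hρ : ∑ i, ρ i = 0) :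
    ((Fintype.card ι : ℝ) - 1) * 𝔼 σ, permStat a ρ σ ^ 2 = (∑ i, a i ^ 2) * ∑ i, ρ i ^ 2 := by
  have hdiag : Fintype.card ι * 𝔼 σ : Perm ι, ∑ i, a i ^ 2 * ρ (σ i) ^ 2
      = (∑ i, a i ^ 2) * ∑ i, ρ i ^ 2 := by
    rw [expect_sum_comm, mul_sum, sum_mul]
    refine sum_congr rfl fun i _ => ?_
    rw [← mul_expect, mul_left_comm, expect_perm_apply (fun k => ρ k ^ 2)]
  have hstein := expect_permStat_mul (ρ := ρ) ha fun x => x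
  simp only [add_sub_cancel_left, ← expect_sum_comm, ← pow_two, sum_permDiff_sq ha hρ,
    expect_add_distrib, ← mul_expect, expect_const univ_nonempty] at hstein
  linarith

theorem expect_permDiff_mul_sub_le {φ ψ : ℝ → ℝ} {c R : ℝ} (hc : 0 ≤ c) (hψ : ∀ x, 0 ≤ ψ x)
    (h : ∀ x y, (y - x) * (φ y - φ x) ≤ c * ((y - x) ^ 2 * (ψ x + ψ y)))
    (hR : ∀ i j, (ρ i - ρ j) ^ 2 ≤ R) (i j : ι) :
    𝔼 σ, permDiff a ρ i j σ * (φ (permStat a ρ σ + permDiff a ρ i j σ) - φ (permStat a ρ σ))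
      ≤ 2 * c * R * (𝔼 σ, ψ (permStat a ρ σ)) * (a i - a j) ^ 2 := by
  have hswap : 𝔼 σ, permDiff a ρ i j σ ^ 2 * ψ (permStat a ρ σ + permDiff a ρ i j σ)
      = 𝔼 σ, permDiff a ρ i j σ ^ 2 * ψ (permStat a ρ σ) := by
    have := expect_perm_mul_right (fun σ => permDiff a ρ i j σ ^ 2 * ψ (permStat a ρ σ)) (swap i j)
    simpa only [permStat_mul_swap, permDiff_mul_swap, neg_sq] using this
  calc _ ≤ 𝔼 σ, c * (permDiff a ρ i j σ ^ 2 * ψ (permStat a ρ σ)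
        + permDiff a ρ i j σ ^ 2 * ψ (permStat a ρ σ + permDiff a ρ i j σ)) :=
        expect_le_expect fun σ _ => by
          have := h (permStat a ρ σ) (permStat a ρ σ + permDiff a ρ i j σ)
          rwa [add_sub_cancel_left, mul_add] at this
    _ = 2 * c * 𝔼 σ, permDiff a ρ i j σ ^ 2 * ψ (permStat a ρ σ) := by
        rw [← mul_expect, expect_add_distrib, hswap]; ring
    _ ≤ 2 * c * 𝔼 σ, R * (a i - a j) ^ 2 * ψ (permStat a ρ σ) := by
        gcongr with σ
        exacts [hψ _, permDiff_sq_le hR i j σ]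
    _ = _ := by rw [← mul_expect]; ring

theorem expect_permStat_mul_le [Nonempty ι] (ha : ∑ i, a i = 0) {φ ψ : ℝ → ℝ} {c R : ℝ}
    (hc : 0 ≤ c) (hψ : ∀ x, 0 ≤ ψ x)
    (h : ∀ x y, (y - x) * (φ y - φ x) ≤ c * ((y - x) ^ 2 * (ψ x + ψ y)))
    (hR : ∀ i j, (ρ i - ρ j) ^ 2 ≤ R) :
    𝔼 σ, permStat a ρ σ * φ (permStat a ρ σ)
      ≤ c * R * (∑ i, a i ^ 2) * 𝔼 σ, ψ (permStat a ρ σ) := by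
  refine le_of_mul_le_mul_left ?_ (by positivity : (0 : ℝ) < 4 * Fintype.card ι)
  calc _ = _ := expect_permStat_mul ha φ
    _ ≤ ∑ i, ∑ j, 2 * c * R * (𝔼 σ, ψ (permStat a ρ σ)) * (a i - a j) ^ 2 :=
        sum_le_sum fun i _ => sum_le_sum fun j _ => expect_permDiff_mul_sub_le hc hψ h hR i j
    _ = 4 * Fintype.card ι * (c * R * (∑ i, a i ^ 2) * 𝔼 σ, ψ (permStat a ρ σ)) := by
        simp only [← mul_sum, sum_sub_sq ha]
        ring

theorem expect_permStat_pow_four_le [Nonempty ι] (ha : ∑ i, a i = 0) {R : ℝ}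
    (hR : ∀ i j, (ρ i - ρ j) ^ 2 ≤ R) :
    𝔼 σ, permStat a ρ σ ^ 4 ≤ 3 / 2 * R * (∑ i, a i ^ 2) * 𝔼 σ, permStat a ρ σ ^ 2 := by
  have hcube : ∀ x y : ℝ, (y - x) * (y ^ 3 - x ^ 3) ≤ 3 / 2 * ((y - x) ^ 2 * (x ^ 2 + y ^ 2)) :=
    fun x y => by nlinarith [sq_nonneg ((y - x) ^ 2)]
  simpa only [← pow_succ'] using
    expect_permStat_mul_le ha (by norm_num) (fun x => sq_nonneg x) hcube hR

theorem expect_permStat_pow_six_le [Nonempty ι] (ha : ∑ i, a i = 0) {R : ℝ}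
    (hR : ∀ i j, (ρ i - ρ j) ^ 2 ≤ R) :
    𝔼 σ, permStat a ρ σ ^ 6 ≤ 5 / 2 * R * (∑ i, a i ^ 2) * 𝔼 σ, permStat a ρ σ ^ 4 := by
  have hfifth : ∀ x y : ℝ, (y - x) * (y ^ 5 - x ^ 5)
      ≤ 5 / 2 * ((y - x) ^ 2 * (x ^ 4 + y ^ 4)) := fun x y => by
    have : 0 ≤ (y - x) ^ 4 * (x ^ 2 + 2 * (x + y) ^ 2 + y ^ 2) := by positivity
    linarith
  simpa only [← pow_succ'] using
    expect_permStat_mul_le ha (by norm_num) (fun x => by positivity) hfifth hR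

theorem expect_permStat_pow_of_odd {e : Perm ι} (he : ∀ i, ρ (e i) = -ρ i) {k : ℕ} (hk : Odd k) :
    𝔼 σ, permStat a ρ σ ^ k = 0 := by
  have hinv : 𝔼 σ, permStat a ρ (e * σ) ^ k = 𝔼 σ, permStat a ρ σ ^ k :=
    Fintype.expect_equiv (Equiv.mulLeft e) _ _ fun _ => rfl
  have hneg : ∀ σ, permStat a ρ (e * σ) = -permStat a ρ σ := fun σ => by simp [permStat, he]
  simp only [hneg, hk.neg_pow, expect_neg_distrib] at hinv
  linarith

end PermutationMoments

section Ranks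

open Equiv Module

/-- The centered rank `π(j) - (r + 1) / 2` of a treatment `j` with `π(j) = k + 1`. -/
noncomputable def rankScore (r : ℕ) (k : Fin r) : ℝ := (k : ℕ) + 1 - ((r : ℝ) + 1) / 2

theorem sum_range_add_one_sub (r : ℕ) (c : ℝ) :
    ∑ k ∈ range r, ((k : ℝ) + 1 - c) = r * (r + 1) / 2 - r * c := by
  induction r with
  | zero => simp
  | succ r ih => rw [sum_range_succ, ih]; push_cast; ring

theorem sum_range_add_one_sub_sq (r : ℕ) (c : ℝ) : ∑ k ∈ range r, ((k : ℝ) + 1 - c) ^ 2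
    = r * (r + 1) * (2 * r + 1) / 6 - c * (r * (r + 1)) + r * c ^ 2 := by
  induction r with
  | zero => simp
  | succ r ih => rw [sum_range_succ, ih]; push_cast; ring

variable {r : ℕ}

theorem sum_rankScore : ∑ k, rankScore r k = 0 := by
  unfold rankScore
  rw [Fin.sum_univ_eq_sum_range fun k => (k : ℝ) + 1 - ((r : ℝ) + 1) / 2, sum_range_add_one_sub]
  ring

theorem sum_rankScore_sq : ∑ k, rankScore r k ^ 2 = r * ((r : ℝ) ^ 2 - 1) / 12 := by
  unfold rankScore
  rw [Fin.sum_univ_eq_sum_range fun k => ((k : ℝ) + 1 - ((r : ℝ) + 1) / 2) ^ 2,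
    sum_range_add_one_sub_sq]
  ring

theorem rankScore_rev (k : Fin r) : rankScore r (Fin.revPerm k) = -rankScore r k := by
  have := k.isLt
  simp only [rankScore, Fin.revPerm_apply, Fin.val_rev]
  rw [Nat.cast_sub (by omega)]
  push_cast
  ring

theorem sq_rankScore_sub_le (i j : Fin r) :
    (rankScore r i - rankScore r j) ^ 2 ≤ ((r : ℝ) - 1) ^ 2 := by
  have hi : ((i : ℕ) : ℝ) + 1 ≤ r := by exact_mod_cast i.isLt
  have hj : ((j : ℕ) : ℝ) + 1 ≤ r := by exact_mod_cast j.isLt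
  have : (0 : ℝ) ≤ (i : ℕ) := Nat.cast_nonneg _
  have : (0 : ℝ) ≤ (j : ℕ) := Nat.cast_nonneg _
  unfold rankScore
  exact sq_le_sq' (by linarith) (by linarith)

/-- The hyperplane of vectors with coordinate sum zero, in which the rank vectors live. -/
noncomputable def sumZero (r : ℕ) : Submodule ℝ (EuclideanSpace ℝ (Fin r)) :=
  (ℝ ∙ (WithLp.toLp 2 1 : EuclideanSpace ℝ (Fin r)))ᗮ

theorem mem_sumZero {v : EuclideanSpace ℝ (Fin r)} : v ∈ sumZero r ↔ ∑ i, v i = 0 := by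
  rw [sumZero, Submodule.mem_orthogonal_singleton_iff_inner_right, PiLp.inner_apply]
  simp

theorem finrank_sumZero [NeZero r] : finrank ℝ (sumZero r) = r - 1 := by
  have : Fact (finrank ℝ (EuclideanSpace ℝ (Fin r)) = r - 1 + 1) :=
    ⟨by rw [finrank_euclideanSpace_fin, Nat.sub_add_cancel NeZero.one_le]⟩
  refine Submodule.finrank_orthogonal_span_singleton fun h => ?_
  simpa using congrFun (congrArg WithLp.ofLp h) 0

/-- The factor that normalizes the centered ranks to variance `1 - 1 / r`, so that rank vectors have
squared norm `r - 1 = dim (sumZero r)`. -/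
noncomputable def rankScale (r : ℕ) : ℝ := √12 / √((r : ℝ) * ((r : ℝ) + 1))

theorem rankScale_sq : rankScale r ^ 2 = 12 / ((r : ℝ) * (r + 1)) := by
  rw [rankScale, div_pow, Real.sq_sqrt (by norm_num), Real.sq_sqrt (by positivity)]

theorem rankScale_sq_mul_le : rankScale r ^ 2 * ((r : ℝ) - 1) ^ 2 ≤ 12 := by
  rcases r.eq_zero_or_pos with rfl | hr
  · simp [rankScale]
  have hr1 : (1 : ℝ) ≤ r := by exact_mod_cast hr
  rw [rankScale_sq, div_mul_eq_mul_div, div_le_iff₀ (by positivity)]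
  nlinarith

/-- The normalized vector of centered ranks. -/
noncomputable def rankVector (r : ℕ) (σ : Perm (Fin r)) : sumZero r :=
  ⟨WithLp.toLp 2 fun j => rankScale r * rankScore r (σ j), mem_sumZero.2 <| by
    simp only [← mul_sum]
    rw [Equiv.sum_comp σ (rankScore r), sum_rankScore, mul_zero]⟩

theorem norm_rankVector_sq [NeZero r] (σ : Perm (Fin r)) :
    ‖rankVector r σ‖ ^ 2 = finrank ℝ (sumZero r) := by
  have hr : (r : ℝ) ≠ 0 := NeZero.ne _
  rw [finrank_sumZero, Submodule.coe_norm, EuclideanSpace.real_norm_sq_eq]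
  simp only [rankVector, mul_pow, ← mul_sum]
  rw [Equiv.sum_comp σ fun k => rankScore r k ^ 2, sum_rankScore_sq, rankScale_sq,
    Nat.cast_sub NeZero.one_le]
  field_simp
  push_cast
  ring

theorem inner_rankVector (w : sumZero r) (σ : Perm (Fin r)) :
    inner ℝ w (rankVector r σ) = rankScale r * permStat w.1.ofLp (rankScore r) σ := by
  rw [Submodule.coe_inner, PiLp.inner_apply, permStat, mul_sum]
  refine sum_congr rfl fun j _ => ?_
  simp only [rankVector, RCLike.inner_apply, conj_trivial]
  ring

theorem expect_inner_rankVector_pow (w : sumZero r) (k : ℕ) :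
    𝔼 σ, inner ℝ w (rankVector r σ) ^ k
      = rankScale r ^ k * 𝔼 σ, permStat w.1.ofLp (rankScore r) σ ^ k := by
  simp only [inner_rankVector, mul_pow, mul_expect]

theorem sum_coe_sumZero (w : sumZero r) : ∑ j, w.1.ofLp j = 0 := mem_sumZero.1 w.2

theorem sum_coe_sumZero_sq (w : sumZero r) : ∑ j, w.1.ofLp j ^ 2 = ‖w‖ ^ 2 := by
  rw [Submodule.coe_norm, EuclideanSpace.real_norm_sq_eq]

theorem expect_inner_rankVector_pow_of_odd (w : sumZero r) {k : ℕ} (hk : Odd k) :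
    𝔼 σ, inner ℝ w (rankVector r σ) ^ k = 0 := by
  rw [expect_inner_rankVector_pow, expect_permStat_pow_of_odd rankScore_rev hk, mul_zero]

theorem expect_inner_rankVector_sq (hr : 2 ≤ r) (w : sumZero r) :
    𝔼 σ, inner ℝ w (rankVector r σ) ^ 2 = ‖w‖ ^ 2 := by
  have hr' : (2 : ℝ) ≤ r := by exact_mod_cast hr
  have hr1 : (r : ℝ) - 1 ≠ 0 := by linarith
  have h := expect_permStat_sq (sum_coe_sumZero w) (sum_rankScore (r := r))
  rw [sum_coe_sumZero_sq, sum_rankScore_sq, Fintype.card_fin] at h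
  rw [expect_inner_rankVector_pow, rankScale_sq, div_mul_eq_mul_div, div_eq_iff (by positivity)]
  refine mul_left_cancel₀ hr1 ?_
  linear_combination 12 * h

theorem rankScale_pow_mul_le (k : ℕ) {C A S T : ℝ} (hC : 0 ≤ C) (hA : 0 ≤ A) (hT : 0 ≤ T)
    (hST : S ≤ C * ((r : ℝ) - 1) ^ 2 * A * T) :
    rankScale r ^ (k + 2) * S ≤ 12 * C * A * (rankScale r ^ k * T) := by
  have hscale : 0 ≤ rankScale r := by unfold rankScale; positivity
  calc rankScale r ^ (k + 2) * S ≤ rankScale r ^ (k + 2) * (C * ((r : ℝ) - 1) ^ 2 * A * T) := by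
        gcongr
    _ = rankScale r ^ 2 * ((r : ℝ) - 1) ^ 2 * C * A * (rankScale r ^ k * T) := by ring
    _ ≤ 12 * C * A * (rankScale r ^ k * T) := by gcongr; exact rankScale_sq_mul_le

theorem expect_inner_rankVector_pow_four_le (hr : 2 ≤ r) (w : sumZero r) :
    𝔼 σ, inner ℝ w (rankVector r σ) ^ 4 ≤ 18 * (‖w‖ ^ 2) ^ 2 := by
  have : NeZero r := ⟨by omega⟩
  rw [expect_inner_rankVector_pow, ← sum_coe_sumZero_sq]
  refine (rankScale_pow_mul_le 2 (by norm_num) (by positivity)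
    (expect_nonneg fun σ _ => by positivity) (expect_permStat_pow_four_le (sum_coe_sumZero w)
      sq_rankScore_sub_le)).trans_eq ?_
  rw [← expect_inner_rankVector_pow, expect_inner_rankVector_sq hr, sum_coe_sumZero_sq]
  ring

theorem expect_inner_rankVector_pow_six_le (hr : 2 ≤ r) (w : sumZero r) :
    𝔼 σ, inner ℝ w (rankVector r σ) ^ 6 ≤ 540 * (‖w‖ ^ 2) ^ 3 := by
  have : NeZero r := ⟨by omega⟩
  calc _ = rankScale r ^ 6 * 𝔼 σ, permStat w.1.ofLp (rankScore r) σ ^ 6 :=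
        expect_inner_rankVector_pow w 6
    _ ≤ 12 * (5 / 2) * (∑ j, w.1.ofLp j ^ 2) * (rankScale r ^ 4
        * 𝔼 σ, permStat w.1.ofLp (rankScore r) σ ^ 4) :=
      rankScale_pow_mul_le 4 (by norm_num) (by positivity)
        (expect_nonneg fun σ _ => by positivity)
        (expect_permStat_pow_six_le (sum_coe_sumZero w) sq_rankScore_sub_le)
    _ ≤ 12 * (5 / 2) * ‖w‖ ^ 2 * (18 * (‖w‖ ^ 2) ^ 2) := by
      rw [sum_coe_sumZero_sq, ← expect_inner_rankVector_pow]
      gcongr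
      exact expect_inner_rankVector_pow_four_le hr w
    _ = 540 * (‖w‖ ^ 2) ^ 3 := by ring

theorem isDesign_rankVector (hr : 2 ≤ r) : IsDesign (rankVector r) where
  norm_sq σ := by
    have : NeZero r := ⟨by omega⟩
    exact norm_rankVector_sq σ
  nearGaussian w :=
    { expect := by simpa using expect_inner_rankVector_pow_of_odd w odd_one
      expect_sq := expect_inner_rankVector_sq hr w
      expect_cube := expect_inner_rankVector_pow_of_odd w (by decide)
      expect_pow_four_le := expect_inner_rankVector_pow_four_le hr w
      expect_pow_six_le := expect_inner_rankVector_pow_six_le hr w }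

theorem friedman_eq_norm_sq (n : ℕ) (ω : Fin n → Perm (Fin r)) :
    friedman n r ω = ‖(√(n : ℝ))⁻¹ • ∑ i, rankVector r (ω i)‖ ^ 2 := by
  rw [Submodule.coe_norm, EuclideanSpace.real_norm_sq_eq, friedman]
  refine sum_congr rfl fun j _ => ?_
  congr 1
  rw [Submodule.coe_smul, Submodule.coe_sum, PiLp.smul_apply, WithLp.ofLp_sum, Finset.sum_apply]
  simp only [rankVector, rankScale, ← mul_sum, smul_eq_mul]
  rw [Sstat, Real.sqrt_mul (by positivity)]
  simp only [rho, rankScore]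
  ring

end Ranks

theorem sixteen_le_mul_one_add_inv {r : ℝ} (hr : 2 ≤ r) :
    16 ≤ 12 * r ^ ((1 : ℝ) / 8) * (1 + 1 / r) := by
  have hr0 : 0 < r := by linarith
  have hpow : (4 / 3 : ℝ) ^ 8 ≤ (r ^ ((1 : ℝ) / 8) * (1 + 1 / r)) ^ 8 :=
    calc (4 / 3 : ℝ) ^ 8 ≤ r * (1 + (8 : ℕ) * (1 / r)) := by
          rw [mul_add, mul_one, mul_left_comm, mul_one_div_cancel hr0.ne']
          norm_num
          linarith
      _ ≤ r * (1 + 1 / r) ^ 8 := by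
          gcongr
          exact one_add_mul_le_pow ((by norm_num : (-2 : ℝ) ≤ 0).trans (by positivity)) 8
      _ = (r ^ ((1 : ℝ) / 8) * (1 + 1 / r)) ^ 8 := by
          rw [mul_pow, ← Real.rpow_natCast (r ^ _), ← Real.rpow_mul hr0.le]
          norm_num
  linarith [le_of_pow_le_pow_left₀ (by norm_num) (by positivity) hpow]

end FriedmanBound

open FriedmanBound

theorem friedman_kolmogorov_bound_general (n r : ℕ) (hn : 1 ≤ n) (hr : 4 ≤ r) (z : ℝ) :
    |((friedmanMeasure n r) {ω | friedman n r ω ≤ z}).toReal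
        - ((chiSq (r - 1)) (Set.Iic z)).toReal| ≤ 16 / (n : ℝ) ^ ((1 : ℝ) / 4) := by
  have : NeZero r := ⟨by omega⟩
  have : Nonempty (Fin n) := ⟨⟨0, hn⟩⟩
  have hn0 : (0 : ℝ) < n := Nat.cast_pos.2 hn
  set y : ℝ := ((n : ℝ) ^ ((1 : ℝ) / 4))⁻¹ with hy
  have hsqrt : (√(n : ℝ))⁻¹ = y ^ 2 := by
    rw [hy, inv_pow, ← Real.rpow_natCast, ← Real.rpow_mul hn0.le, Real.sqrt_eq_rpow]
    norm_num
  have hny : Fintype.card (Fin n) * y ^ 4 = 1 := by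
    rw [Fintype.card_fin, show y ^ 4 = (y ^ 2) ^ 2 by ring, ← hsqrt, inv_pow,
      Real.sq_sqrt hn0.le, mul_inv_cancel₀ hn0.ne']
  have hd : 3 ≤ Module.finrank ℝ (sumZero r) := by rw [finrank_sumZero]; omega
  have h := (isDesign_rankVector (by omega)).abs_measureReal_sub_chiSq_le hd
    (by positivity) hny z
  simp only [← hsqrt, ← friedman_eq_norm_sq, finrank_sumZero] at h
  rwa [div_eq_mul_inv, ← hy]

/-- **Corollary 1.3, case `r ≥ 4` (Gaunt–Reinert).** For `n ≥ 1`, `r ≥ 4` and all `z ≥ 0`,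
`|P(F_r ≤ z) − P(Y_{r−1} ≤ z)| ≤ (12r^{1/8}/n^{1/4})(1 + 1/r) + 41/(r^{1/4}n^{1/2})
+ 28r^{3/8}/n^{3/4} + 3r^{1/8}/n^{5/4} + 8r^{3/4}/n^{3/2}`. -/
theorem friedman_kolmogorov_bound (n r : ℕ) (hn : 1 ≤ n) (hr : 4 ≤ r) (z : ℝ) (hz : 0 ≤ z) :
    |((friedmanMeasure n r) {ω | friedman n r ω ≤ z}).toReal
        - ((chiSq (r - 1)) (Set.Iic z)).toReal|
      ≤ 12 * (r : ℝ) ^ ((1 : ℝ) / 8) / (n : ℝ) ^ ((1 : ℝ) / 4) * (1 + 1 / (r : ℝ))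
        + 41 / ((r : ℝ) ^ ((1 : ℝ) / 4) * (n : ℝ) ^ ((1 : ℝ) / 2))
        + 28 * (r : ℝ) ^ ((3 : ℝ) / 8) / (n : ℝ) ^ ((3 : ℝ) / 4)
        + 3 * (r : ℝ) ^ ((1 : ℝ) / 8) / (n : ℝ) ^ ((5 : ℝ) / 4)
        + 8 * (r : ℝ) ^ ((3 : ℝ) / 4) / (n : ℝ) ^ ((3 : ℝ) / 2) := by
  calc _ ≤ 16 / (n : ℝ) ^ ((1 : ℝ) / 4) := friedman_kolmogorov_bound_general n r hn hr z
    _ ≤ 12 * (r : ℝ) ^ ((1 : ℝ) / 8) * (1 + 1 / (r : ℝ)) / (n : ℝ) ^ ((1 : ℝ) / 4) := by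
        gcongr
        exact sixteen_le_mul_one_add_inv (by exact_mod_cast (by omega : 2 ≤ r))
    _ = 12 * (r : ℝ) ^ ((1 : ℝ) / 8) / (n : ℝ) ^ ((1 : ℝ) / 4) * (1 + 1 / (r : ℝ)) := by ring
    _ ≤ _ := by simp only [add_assoc]; exact le_add_of_nonneg_right (by positivity)
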